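/- arXiv:2403.16589 — 6 statements merged into one kernel-verified Lean document; each statement's English description precedes it below -/
import Mathlib

section
/- For all n ≥ 2, the number of sets in ℋₙ that are not sumsets satisfies |ℋₙ \ 𝒮ₙ| ≤ 2^(2n−1) · 3^(2^(n−2)). In particular, |ℋₙ \ 𝒮ₙ| = o(|ℋₙ|). -/
open Pointwise

/-- `V n` is the vector space `F₂ⁿ`. -/
abbrev V (n : ℕ) : Type := Fin n → ZMod 2

/-- `𝒮ₙ`: the family of sumsets `A + A` for `A ⊆ F₂ⁿ`. -/
def sumsets (n : ℕ) : Finset (Finset (V n)) :=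
  Finset.image (fun A : Finset (V n) => A + A) Finset.univ

/-- `v^⊥ = {x : ⟨x, v⟩ = 0}`. -/
def perp {n : ℕ} (v : V n) : Finset (V n) :=
  Finset.univ.filter (fun x => ∑ i, x i * v i = 0)

/-- `ℋₙ`: subsets of `F₂ⁿ` containing a complete linear subspace of co-dimension 1. -/
def Hfam (n : ℕ) : Finset (Finset (V n)) :=
  Finset.univ.filter (fun S => ∃ v : V n, v ≠ 0 ∧ perp v ⊆ S)

/-!
Let `H` be a subgroup of index two in a finite abelian group and let `S ⊇ H`. Two elements outside
`H` add up to an element of `H`, so `A = {0} ∪ (S \ H)` satisfies `A + A = S` unless some `h ∈ H`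
is not a sum of two elements of `S \ H`. In the latter case `S \ H` contains no two (possibly equal)
points exchanged by the involution `x ↦ h - x` of the complement of `H`, which leaves at most three
possibilities for each of the at most `|H| / 2` two-point orbits and one for each fixed point.
Summing over `h ∈ H` and over the hyperplanes `H = v^⊥` of `F₂ⁿ` bounds `|ℋₙ \ 𝒮ₙ|`, while the
supersets of a single hyperplane already number `2 ^ 2 ^ (n - 1) = 4 ^ 2 ^ (n - 2)`.
-/

section Involution

variable {α : Type*} {σ : α → α} {C : Finset α}

lemma exists_subset_forall_mem_or_apply_mem (hσ : Function.Involutive σ) (hC : Set.MapsTo σ C C) :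
    ∃ K ⊆ C, 2 * K.card ≤ C.card ∧ ∀ x ∈ C, σ x ≠ x → x ∈ K ∨ σ x ∈ K := by
  classical
  let _ : LinearOrder α := linearOrderOfSTO WellOrderingRel
  have hdisj : Disjoint {x ∈ C | x < σ x} ({x ∈ C | x < σ x}.image σ) := by
    simp only [Finset.disjoint_left, Finset.mem_image, Finset.mem_filter]
    rintro _ ⟨-, hlt⟩ ⟨y, ⟨-, hy⟩, rfl⟩
    rw [hσ y] at hlt
    exact hlt.asymm hy
  refine ⟨{x ∈ C | x < σ x}, Finset.filter_subset _ _, ?_, fun x hx hne ↦ ?_⟩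
  · rw [two_mul]
    nth_rw 2 [← Finset.card_image_of_injective _ hσ.injective]
    rw [← Finset.card_union_of_disjoint hdisj]
    refine Finset.card_le_card (Finset.union_subset (Finset.filter_subset _ _) ?_)
    exact Finset.image_subset_iff.2 fun x hx ↦ hC (Finset.mem_filter.1 hx).1
  · simp only [Finset.mem_filter, hσ x]
    exact hne.lt_or_gt.symm.imp (⟨hx, ·⟩) (⟨hC hx, ·⟩)

lemma card_filter_forall_apply_notMem_le [DecidableEq α] (hσ : Function.Involutive σ)
    (hC : Set.MapsTo σ C C) :
    {T ∈ C.powerset | ∀ x ∈ T, σ x ∉ T}.card ≤ 3 ^ (C.card / 2) := by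
  obtain ⟨K, -, hcard, hK⟩ := exists_subset_forall_mem_or_apply_mem hσ hC
  let trace (T : Finset α) (x : K) : Bool × Bool := (decide (x.1 ∈ T), decide (σ x ∈ T))
  let patterns : Finset (K → Bool × Bool) := Fintype.piFinset fun _ ↦ {(true, true)}ᶜ
  calc {T ∈ C.powerset | ∀ x ∈ T, σ x ∉ T}.card
      ≤ patterns.card := Finset.card_le_card_of_injOn trace ?maps ?inj
    _ = 3 ^ K.card := by
      simp [patterns, Finset.card_compl]
    _ ≤ 3 ^ (C.card / 2) := Nat.pow_le_pow_right (by norm_num) (by omega)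
  case maps =>
    intro T hT
    have hT := (Finset.mem_filter.1 hT).2
    simpa [patterns, trace] using fun x _ ↦ hT x
  case inj =>
    intro T hT T' hT' heq
    obtain ⟨hTC, hT⟩ := Finset.mem_filter.1 hT
    obtain ⟨hTC', hT'⟩ := Finset.mem_filter.1 hT'
    rw [Finset.mem_powerset] at hTC hTC'
    have hagree (x : α) (hx : x ∈ K) : (x ∈ T ↔ x ∈ T') ∧ (σ x ∈ T ↔ σ x ∈ T') := by
      simpa [trace] using congrFun heq ⟨x, hx⟩
    ext x
    by_cases hxC : x ∈ C
    · by_cases hfix : σ x = x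
      · have hxT : x ∉ T := fun hx ↦ hT x hx (hfix.symm ▸ hx)
        have hxT' : x ∉ T' := fun hx ↦ hT' x hx (hfix.symm ▸ hx)
        exact iff_of_false hxT hxT'
      · rcases hK x hxC hfix with hx | hx
        · exact (hagree x hx).1
        · simpa only [hσ x] using (hagree _ hx).2
    · exact iff_of_false (fun hx ↦ hxC (hTC hx)) fun hx ↦ hxC (hTC' hx)

end Involution

section IndexTwo

lemma insert_zero_diff_add_self {G : Type*} [AddGroup G] {H : AddSubgroup G} {S : Set G}
    (hH : H.index = 2) (hHS : (H : Set G) ⊆ S) (hsum : (H : Set G) ⊆ S \ H + S \ H) :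
    insert 0 (S \ H) + insert 0 (S \ H) = S := by
  apply Set.Subset.antisymm
  · rintro _ ⟨a, rfl | ⟨haS, haH⟩, b, rfl | ⟨hbS, hbH⟩, rfl⟩
    · simpa using hHS H.zero_mem
    · simpa using hbS
    · simpa using haS
    · exact hHS ((AddSubgroup.add_mem_iff_of_index_two hH).2 (iff_of_false haH hbH))
  · intro x hx
    by_cases hxH : x ∈ H
    · exact Set.add_subset_add (Set.subset_insert _ _) (Set.subset_insert _ _) (hsum hxH)
    · exact ⟨x, Set.mem_insert_of_mem _ ⟨hx, hxH⟩, 0, Set.mem_insert _ _, add_zero x⟩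

variable {G : Type*} [AddCommGroup G] [Fintype G] {H : AddSubgroup G}

open Classical in
/-- The sets `S ⊇ H` such that `h` is not a sum of two elements of `S \ H`. For `h ∈ H` and `H` of
index two, these are the sets that can fail to be a sumset on account of `h`. -/
noncomputable def supersetsMissing (H : AddSubgroup G) (h : G) : Finset (Finset G) :=
  {S | (H : Set G) ⊆ S ∧ h ∉ (S : Set G) \ H + (S : Set G) \ H}

lemma mem_supersetsMissing {h : G} {S : Finset G} :
    S ∈ supersetsMissing H h ↔ (H : Set G) ⊆ S ∧ h ∉ (S : Set G) \ H + (S : Set G) \ H := by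
  simp only [supersetsMissing, Finset.mem_filter, Finset.mem_univ, true_and]

open Classical in
lemma card_filter_notMem_of_index_two (hH : H.index = 2) :
    ({x | x ∉ H} : Finset G).card = Nat.card H := by
  have hpart := Finset.card_filter_add_card_filter_not (s := Finset.univ) (· ∈ H)
  have hG := H.card_mul_index
  have hcard : Nat.card H = ({x | x ∈ H} : Finset G).card := Nat.subtype_card _ (by simp)
  rw [hH, Nat.card_eq_fintype_card (α := G), ← Finset.card_univ] at hG
  omega

lemma card_supersetsMissing_le (hH : H.index = 2) {h : G} (hh : h ∈ H) :
    (supersetsMissing H h).card ≤ 3 ^ (Nat.card H / 2) := by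
  classical
  have hmaps : Set.MapsTo (h - ·) (({x | x ∉ H} : Finset G) : Set G) ({x | x ∉ H} : Finset G) := by
    intro x hx
    simpa [sub_eq_add_neg, H.add_mem_cancel_left hh] using hx
  rw [← card_filter_notMem_of_index_two hH]
  refine le_trans (Finset.card_le_card_of_injOn (fun S ↦ {x ∈ S | x ∉ H}) ?maps ?inj)
    (card_filter_forall_apply_notMem_le (sub_sub_cancel h) hmaps)
  case maps =>
    intro S hS
    obtain ⟨-, hmiss⟩ := mem_supersetsMissing.1 hS
    simp only [Finset.coe_filter, Set.mem_ofPred_eq, Finset.mem_powerset]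
    refine ⟨Finset.filter_subset_filter _ (Finset.subset_univ S), fun x hx hhx ↦ hmiss ?_⟩
    exact ⟨x, Finset.mem_filter.1 hx, h - x, Finset.mem_filter.1 hhx, add_sub_cancel x h⟩
  case inj =>
    intro S hS T hT hST
    obtain ⟨hHS, -⟩ := mem_supersetsMissing.1 hS
    obtain ⟨hHT, -⟩ := mem_supersetsMissing.1 hT
    ext x
    by_cases hx : x ∈ H
    · exact iff_of_true (hHS hx) (hHT hx)
    · simpa [hx] using Finset.ext_iff.1 hST x

lemma exists_mem_supersetsMissing [DecidableEq G] (hH : H.index = 2) {S : Finset G}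
    (hHS : (H : Set G) ⊆ S) (hS : ∀ A : Finset G, A + A ≠ S) :
    ∃ h ∈ H, S ∈ supersetsMissing H h := by
  classical
  by_contra! hsum
  refine hS (insert 0 {x ∈ S | x ∉ H}) (Finset.coe_injective ?_)
  push_cast [Finset.coe_filter]
  refine insert_zero_diff_add_self hH hHS fun h hh ↦ ?_
  by_contra hmiss
  exact hsum h hh (mem_supersetsMissing.2 ⟨hHS, hmiss⟩)

open Classical in
lemma card_supersets_not_sumset_le [DecidableEq G] (hH : H.index = 2) :
    ({S | (H : Set G) ⊆ S ∧ ∀ A, A + A ≠ S} : Finset (Finset G)).card ≤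
      Nat.card H * 3 ^ (Nat.card H / 2) := by
  have hcover : ({S | (H : Set G) ⊆ S ∧ ∀ A, A + A ≠ S} : Finset (Finset G)) ⊆
      ({h | h ∈ H} : Finset G).biUnion (supersetsMissing H) := by
    intro S hS
    obtain ⟨hHS, hA⟩ := (Finset.mem_filter.1 hS).2
    simpa using exists_mem_supersetsMissing hH hHS hA
  have hcard : Nat.card H = ({h | h ∈ H} : Finset G).card := Nat.subtype_card _ (by simp)
  nth_rw 1 [hcard]
  refine (Finset.card_le_card hcover).trans (Finset.card_biUnion_le_card_mul _ _ _ fun h hh ↦ ?_)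
  exact card_supersetsMissing_le hH (Finset.mem_filter.1 hh).2

end IndexTwo

section Hyperplane

variable {n : ℕ} {v : V n}

/-- The hyperplane `v^⊥` as a subgroup: the kernel of the functional `x ↦ v ⬝ᵥ x`. -/
def perpSubgroup (v : V n) : AddSubgroup (V n) :=
  (dotProductEquiv (ZMod 2) (Fin n) v).toAddMonoidHom.ker

lemma coe_perpSubgroup (v : V n) : (perpSubgroup v : Set (V n)) = perp v := by
  ext x
  simp [perpSubgroup, perp, dotProduct, mul_comm, AddMonoidHom.mem_ker]

lemma index_perpSubgroup (hv : v ≠ 0) : (perpSubgroup v).index = 2 := by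
  have hsurj : Function.Surjective (dotProductEquiv (ZMod 2) (Fin n) v) :=
    LinearMap.surjective (by simpa using hv)
  rw [perpSubgroup, AddSubgroup.index_ker, AddMonoidHom.range_eq_top.2 hsurj, AddSubgroup.card_top,
    Nat.card_zmod]

lemma card_perpSubgroup (hv : v ≠ 0) : Nat.card (perpSubgroup v) = 2 ^ (n - 1) := by
  have hn : n ≠ 0 := by
    rintro rfl
    exact hv (Subsingleton.elim _ _)
  have hcard := (perpSubgroup v).card_mul_index
  rw [index_perpSubgroup hv, Nat.card_fun, Nat.card_zmod, Nat.card_fin] at hcard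
  exact Nat.mul_right_cancel two_pos (hcard.trans (pow_sub_one_mul hn 2).symm)

lemma card_perp (hv : v ≠ 0) : (perp v).card = 2 ^ (n - 1) := by
  rw [← card_perpSubgroup hv, ← Set.ncard_coe_finset, ← coe_perpSubgroup]
  exact (Nat.card_coe_set_eq _).symm

end Hyperplane

section Counting

open Classical in
lemma Hfam_sdiff_sumsets_subset (n : ℕ) :
    Hfam n \ sumsets n ⊆ ({v | v ≠ 0} : Finset (V n)).biUnion
      fun v ↦ {S | (perpSubgroup v : Set (V n)) ⊆ S ∧ ∀ A, A + A ≠ S} := by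
  intro S hS
  simp only [Hfam, sumsets, Finset.mem_sdiff, Finset.mem_filter, Finset.mem_univ, true_and,
    Finset.mem_image, not_exists] at hS
  obtain ⟨⟨v, hv, hvS⟩, hA⟩ := hS
  simp only [Finset.mem_biUnion, Finset.mem_filter, Finset.mem_univ, true_and, coe_perpSubgroup,
    Finset.coe_subset]
  exact ⟨v, hv, hvS, hA⟩

lemma card_Hfam_sdiff_sumsets_le {n : ℕ} (hn : 2 ≤ n) :
    (Hfam n \ sumsets n).card ≤ 2 ^ (2 * n - 1) * 3 ^ 2 ^ (n - 2) := by
  classical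
  have hhalf : 2 ^ (n - 1) / 2 = 2 ^ (n - 2) := by
    rw [← Nat.pow_pred_mul (x := 2) (w := n - 1) (by omega), Nat.mul_div_cancel _ two_pos]
    rfl
  have hfiber (v : V n) (hv : v ∈ ({v | v ≠ 0} : Finset (V n))) :
      ({S | (perpSubgroup v : Set (V n)) ⊆ S ∧ ∀ A, A + A ≠ S} : Finset (Finset (V n))).card ≤
        2 ^ (n - 1) * 3 ^ 2 ^ (n - 2) := by
    have hv : v ≠ 0 := (Finset.mem_filter.1 hv).2
    have hle := card_supersets_not_sumset_le (index_perpSubgroup hv)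
    rwa [card_perpSubgroup hv, hhalf] at hle
  calc (Hfam n \ sumsets n).card
      ≤ ({v | v ≠ 0} : Finset (V n)).card * (2 ^ (n - 1) * 3 ^ 2 ^ (n - 2)) :=
        (Finset.card_le_card (Hfam_sdiff_sumsets_subset n)).trans
          (Finset.card_biUnion_le_card_mul _ _ _ hfiber)
    _ ≤ 2 ^ n * (2 ^ (n - 1) * 3 ^ 2 ^ (n - 2)) := by
        gcongr
        exact (Finset.card_le_univ _).trans_eq (by simp)
    _ = 2 ^ (2 * n - 1) * 3 ^ 2 ^ (n - 2) := by
        rw [← mul_assoc, ← pow_add, show n + (n - 1) = 2 * n - 1 by omega]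

lemma two_pow_le_card_Hfam {n : ℕ} (hn : n ≠ 0) : 2 ^ 2 ^ (n - 1) ≤ (Hfam n).card := by
  have : NeZero n := ⟨hn⟩
  obtain ⟨v, hv⟩ := exists_ne (0 : V n)
  have hsub : Finset.Icc (perp v) Finset.univ ⊆ Hfam n := fun S hS ↦
    Finset.mem_filter.2 ⟨Finset.mem_univ S, v, hv, (Finset.mem_Icc.1 hS).1⟩
  have hexp : Fintype.card (V n) - 2 ^ (n - 1) = 2 ^ (n - 1) := by
    rw [Fintype.card_fun, ZMod.card, Fintype.card_fin, ← pow_sub_one_mul hn]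
    omega
  calc 2 ^ 2 ^ (n - 1) = (Finset.Icc (perp v) Finset.univ).card := by
        rw [Finset.card_Icc_finset (Finset.subset_univ _), card_perp hv, Finset.card_univ, hexp]
    _ ≤ (Hfam n).card := Finset.card_le_card hsub

lemma card_Hfam_sdiff_sumsets_le_mul_card_Hfam {n : ℕ} (hn : 2 ≤ n) :
    ((Hfam n \ sumsets n).card : ℝ) ≤
      8 * ((2 ^ (n - 2) : ℕ) ^ 2 * (3 / 4) ^ 2 ^ (n - 2)) * (Hfam n).card := by
  obtain ⟨k, rfl⟩ := Nat.exists_eq_add_of_le' hn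
  have hupper : ((Hfam (k + 2) \ sumsets (k + 2)).card : ℝ) ≤ 2 ^ (2 * k + 3) * 3 ^ 2 ^ k := by
    exact_mod_cast card_Hfam_sdiff_sumsets_le hn
  have hlower : (4 : ℝ) ^ 2 ^ k ≤ (Hfam (k + 2)).card := by
    have h4 : 4 ^ 2 ^ k = 2 ^ 2 ^ (k + 1) := by rw [pow_succ', pow_mul]; norm_num
    exact_mod_cast h4.trans_le (two_pow_le_card_Hfam (n := k + 2) (by omega))
  calc ((Hfam (k + 2) \ sumsets (k + 2)).card : ℝ) ≤ 2 ^ (2 * k + 3) * 3 ^ 2 ^ k := hupper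
    _ = 8 * ((2 ^ k : ℕ) ^ 2 * (3 / 4) ^ 2 ^ k) * 4 ^ 2 ^ k := by
        rw [div_pow]
        push_cast
        field_simp
        ring
    _ ≤ 8 * ((2 ^ k : ℕ) ^ 2 * (3 / 4) ^ 2 ^ k) * (Hfam (k + 2)).card := by gcongr

lemma tendsto_two_pow_sq_mul_pow_two_pow {r : ℝ} (hr : |r| < 1) :
    Filter.Tendsto (fun n : ℕ ↦ ((2 ^ (n - 2) : ℕ) : ℝ) ^ 2 * r ^ 2 ^ (n - 2))
      Filter.atTop (nhds 0) :=
  (tendsto_pow_const_mul_const_pow_of_abs_lt_one 2 hr).comp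
    ((tendsto_pow_atTop_atTop_of_one_lt one_lt_two).comp (Filter.tendsto_sub_atTop_nat 2))

end Counting

/-- For `n ≥ 2`, `|ℋₙ \ 𝒮ₙ| ≤ 2^(2n−1)·3^(2^(n−2))`; in particular
`|ℋₙ \ 𝒮ₙ| = o(|ℋₙ|)`. -/
theorem Hfam_minus_sumsets_small :
    (∀ n : ℕ, 2 ≤ n →
      (Hfam n \ sumsets n).card ≤ 2 ^ (2 * n - 1) * 3 ^ 2 ^ (n - 2)) ∧
    (∀ ε : ℝ, 0 < ε → ∃ n₀ : ℕ, ∀ n : ℕ, n₀ ≤ n →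
      (((Hfam n \ sumsets n).card : ℝ)) ≤ ε * (Hfam n).card) := by
  refine ⟨fun n hn ↦ card_Hfam_sdiff_sumsets_le hn, fun ε hε ↦ ?_⟩
  have hratio := (tendsto_two_pow_sq_mul_pow_two_pow (r := 3 / 4)
    (by norm_num [abs_of_pos])).const_mul 8
  rw [mul_zero] at hratio
  obtain ⟨N, hN⟩ := Filter.eventually_atTop.1 (hratio.eventually_le_const hε)
  refine ⟨max N 2, fun n hn ↦ ?_⟩
  calc ((Hfam n \ sumsets n).card : ℝ)
      ≤ 8 * ((2 ^ (n - 2) : ℕ) ^ 2 * (3 / 4) ^ 2 ^ (n - 2)) * (Hfam n).card :=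
        card_Hfam_sdiff_sumsets_le_mul_card_Hfam ((le_max_right N 2).trans hn)
    _ ≤ ε * (Hfam n).card := by
        gcongr
        exact hN n ((le_max_left N 2).trans hn)
end

section
/- For all n ≥ 1, the number of subsets A ⊆ F₂ⁿ for which A+A ≠ F₂ⁿ is at most 2ⁿ · 3^(2^(n−1)). -/
open Pointwise

/-!
If `A + A` misses `x`, then `A` contains at most one element of each pair `{a, x - a}` with
`a ≠ x - a`, and no `a` with `a = x - a`. There are at most `|G| / 2` such pairs and each leaves
three choices, so at most `3 ^ (|G| / 2)` sets `A` miss a given `x`; a union bound over `x`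
concludes.
-/

section Involution

open Finset Function

variable {α : Type*} [Fintype α] {σ : α → α}

theorem exists_card_le_half_forall_mem_or_apply_mem (hσ : Involutive σ) :
    ∃ T : Finset α, #T ≤ Fintype.card α / 2 ∧ ∀ a, σ a ≠ a → a ∈ T ∨ σ a ∈ T := by
  classical
  let _ : LinearOrder α := IsWellOrder.linearOrder WellOrderingRel
  let T : Finset α := {a | a < σ a}
  have mem_T (a : α) : a ∈ T ↔ a < σ a := mem_filter_univ a
  have disjoint_T : Disjoint T (T.image σ) := by
    simp only [disjoint_right, forall_mem_image, mem_T, hσ _]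
    exact fun _ => lt_asymm
  refine ⟨T, ?_, fun a ha => ?_⟩
  · rw [Nat.le_div_iff_mul_le two_pos]
    calc #T * 2 = #T + #(T.image σ) := by rw [card_image_of_injective T hσ.injective, mul_two]
      _ = #(T ∪ T.image σ) := (card_union_of_disjoint disjoint_T).symm
      _ ≤ Fintype.card α := card_le_univ _
  · rw [mem_T, mem_T, hσ a]
    exact ha.symm.lt_or_gt

variable [DecidableEq α]

theorem card_filter_forall_apply_notMem_le_s7 (hσ : Involutive σ) :
    #{A : Finset α | ∀ a ∈ A, σ a ∉ A} ≤ 3 ^ (Fintype.card α / 2) := by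
  obtain ⟨T, card_T, mem_or_mem⟩ := exists_card_le_half_forall_mem_or_apply_mem hσ
  let avoiding : Finset (Finset α) := {A | ∀ a ∈ A, σ a ∉ A}
  let pattern (A : Finset α) (t : T) : Bool × Bool := (decide (↑t ∈ A), decide (σ t ∈ A))
  let patterns : Finset (T → Bool × Bool) := Fintype.piFinset fun _ => {(true, true)}ᶜ
  have card_patterns : #patterns = 3 ^ #T := by simp [patterns, card_compl]
  have pattern_mem : ∀ A ∈ avoiding, pattern A ∈ patterns := by
    intro A hA
    rw [mem_filter_univ] at hA
    simpa [pattern, patterns] using fun t _ => hA t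
  have pattern_injOn : Set.InjOn pattern avoiding := by
    intro A hA B hB hAB
    rw [mem_coe, mem_filter_univ] at hA hB
    have agree_on_T (t : α) (ht : t ∈ T) : (t ∈ A ↔ t ∈ B) ∧ (σ t ∈ A ↔ σ t ∈ B) := by
      simpa [pattern] using congrFun hAB ⟨t, ht⟩
    ext a
    by_cases fixed : σ a = a
    · have notMem_of_fixed {C : Finset α} (hC : ∀ a ∈ C, σ a ∉ C) : a ∉ C :=
        fun ha => hC a ha (fixed.symm ▸ ha)
      exact iff_of_false (notMem_of_fixed hA) (notMem_of_fixed hB)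
    · obtain ha | hσa := mem_or_mem a fixed
      · exact (agree_on_T a ha).1
      · simpa only [hσ a] using (agree_on_T (σ a) hσa).2
  calc #avoiding ≤ #patterns := card_le_card_of_injOn pattern pattern_mem pattern_injOn
    _ = 3 ^ #T := card_patterns
    _ ≤ 3 ^ (Fintype.card α / 2) := Nat.pow_le_pow_right three_pos card_T

end Involution

section Sumset

open Finset

variable {G : Type*} [AddCommGroup G] [DecidableEq G]

theorem notMem_add_self_iff {A : Finset G} {x : G} : x ∉ A + A ↔ ∀ a ∈ A, x - a ∉ A := by
  simp only [mem_add, ← eq_sub_iff_add_eq', exists_eq_right, not_exists, not_and]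

variable [Fintype G]

theorem card_filter_notMem_add_self_le (x : G) :
    #{A : Finset G | x ∉ A + A} ≤ 3 ^ (Fintype.card G / 2) := by
  simpa only [notMem_add_self_iff] using card_filter_forall_apply_notMem_le_s7 (sub_sub_cancel x)

variable (G) in
theorem count_incomplete_sumsets_general :
    #{A : Finset G | A + A ≠ univ} ≤ Fintype.card G * 3 ^ (Fintype.card G / 2) := by
  have incomplete_eq_biUnion : ({A | A + A ≠ univ} : Finset (Finset G)) =
      univ.biUnion fun x => {A | x ∉ A + A} := by
    ext A
    simp [eq_univ_iff_forall]
  rw [incomplete_eq_biUnion]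
  exact card_biUnion_le_card_mul _ _ _ fun x _ => card_filter_notMem_add_self_le x

end Sumset

/-- For `n ≥ 1`, the number of subsets `A ⊆ F₂ⁿ` with `A + A ≠ F₂ⁿ`
is at most `2ⁿ · 3^(2^(n−1))`. -/
theorem count_incomplete_sumsets (n : ℕ) (hn : 1 ≤ n) :
    (Finset.univ.filter
        (fun A : Finset (V n) => A + A ≠ Finset.univ)).card ≤
      2 ^ n * 3 ^ 2 ^ (n - 1) := by
  have card_half : 2 ^ n / 2 = 2 ^ (n - 1) := by simpa using Nat.pow_div hn two_pos
  simpa [ZMod.card, card_half] using count_incomplete_sumsets_general (V n)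
end

section
/- There exists N₀ such that for every finite abelian group G of order N ≥ N₀, the number of subsets S ⊆ G that can be expressed as a union of two sumsets (i.e., S = (A+A) ∪ (B+B) for some A, B ⊆ G) is at most 2^(N − N/200). -/
open Pointwise

/-!
Let `N = |G|` and `S = (A + A) ∪ (B + B)`. If both `A` and `B` have at most `N / 16` elements, then
`S` is determined by a pair of small sets, and by the entropy bound there are few such pairs.
Otherwise one of the two, say `A`, has at least `N / 16` elements. It then contains a fingerprint
`D` of size only `O(√N)` with `|D + D| ≥ |A| / 2`: fix `X ⊆ A` of size about `√|A|` and, as long as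
the translates `f + X` cover less than `|A| / 2` elements, pick by averaging a further `f ∈ A` for
which at least half of `f + X` is new. As `S` contains `D + D`, it is determined by `D`, for which
there are few choices, and by its trace on the at most `N - N / 32` elements outside `D + D`.
-/

section

open Finset Real

section SmallSets

lemma exp_neg_mul_binEntropy_le_pow_mul_pow {p : ℝ} (hp₀ : 0 < p) (hp : p ≤ 1 / 2) {k n : ℕ}
    (hk : k ≤ p * n) : exp (-(n * binEntropy p)) ≤ p ^ k * (1 - p) ^ (n - k) := by
  have hkn : k ≤ n := by
    have : (k : ℝ) ≤ n := hk.trans (mul_le_of_le_one_left n.cast_nonneg (by linarith))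
    exact_mod_cast this
  have hlog : log p ≤ log (1 - p) := log_le_log hp₀ (by linarith)
  have hpow : p ^ k * (1 - p) ^ (n - k) = exp (k * log p + (n - k : ℕ) * log (1 - p)) := by
    rw [exp_add, exp_nat_mul, exp_nat_mul, exp_log hp₀, exp_log (by linarith)]
  rw [hpow, exp_le_exp, binEntropy, log_inv, log_inv, Nat.cast_sub hkn]
  linarith [mul_nonneg (sub_nonneg.2 hk) (sub_nonneg.2 hlog)]

lemma binEntropy_le_mul_one_sub_log {p : ℝ} (hp : p < 1) :
    binEntropy p ≤ p * (1 - log p) := by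
  have hp' : 0 < 1 - p := sub_pos.2 hp
  have h : (1 - p) * log (1 - p)⁻¹ ≤ p := by
    calc (1 - p) * log (1 - p)⁻¹ ≤ (1 - p) * ((1 - p)⁻¹ - 1) := by
          gcongr
          exact log_le_sub_one_of_pos (inv_pos.2 hp')
      _ = p := by field_simp; ring
  rw [binEntropy, log_inv p]
  linarith

variable (α : Type*) [Fintype α]

lemma card_filter_card_le_mul_le_exp_binEntropy {p : ℝ} (hp₀ : 0 < p) (hp : p ≤ 1 / 2) :
    (#{A : Finset α | (#A : ℝ) ≤ p * Fintype.card α} : ℝ) ≤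
      exp (Fintype.card α * binEntropy p) := by
  set N := Fintype.card α
  set 𝒜 : Finset (Finset α) := {A | (#A : ℝ) ≤ p * N}
  have hp₁ : 0 ≤ 1 - p := by linarith
  have hweight : #𝒜 * exp (-(N * binEntropy p)) ≤ 1 := by
    calc #𝒜 * exp (-(N * binEntropy p))
        ≤ ∑ A ∈ 𝒜, p ^ #A * (1 - p) ^ (N - #A) := by
          rw [← nsmul_eq_mul]
          exact card_nsmul_le_sum _ _ _ fun A hA ↦
            exp_neg_mul_binEntropy_le_pow_mul_pow hp₀ hp (mem_filter.1 hA).2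
      _ ≤ ∑ A : Finset α, p ^ #A * (1 - p) ^ (N - #A) :=
          sum_le_sum_of_subset_of_nonneg (subset_univ _) fun A _ _ ↦ by positivity
      _ = 1 := by rw [Fintype.sum_pow_mul_eq_add_pow, add_sub_cancel, one_pow]
  rwa [exp_neg, ← div_eq_mul_inv, div_le_one (exp_pos _)] at hweight

lemma card_filter_two_pow_mul_card_le {a : ℕ} (ha : a ≠ 0) :
    (#{A : Finset α | 2 ^ a * #A ≤ Fintype.card α} : ℝ) ≤
      2 ^ ((a + 2) / 2 ^ a * Fintype.card α : ℝ) := by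
  set N := Fintype.card α
  have hp : ((2 : ℝ) ^ a)⁻¹ ≤ 1 / 2 := by
    rw [one_div]
    gcongr
    exact le_self_pow₀ one_le_two ha
  have hentropy : binEntropy ((2 : ℝ) ^ a)⁻¹ ≤ log 2 * ((a + 2) / 2 ^ a) := by
    calc binEntropy ((2 : ℝ) ^ a)⁻¹ ≤ ((2 : ℝ) ^ a)⁻¹ * (1 - log ((2 : ℝ) ^ a)⁻¹) :=
          binEntropy_le_mul_one_sub_log (by linarith)
      _ = ((2 : ℝ) ^ a)⁻¹ * (1 + a * log 2) := by rw [log_inv, log_pow, sub_neg_eq_add]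
      _ ≤ ((2 : ℝ) ^ a)⁻¹ * (2 * log 2 + a * log 2) := by
          gcongr
          linarith [log_two_gt_d9]
      _ = log 2 * ((a + 2) / 2 ^ a) := by ring
  calc (#{A : Finset α | 2 ^ a * #A ≤ N} : ℝ)
      = #{A : Finset α | (#A : ℝ) ≤ ((2 : ℝ) ^ a)⁻¹ * N} := by
        congr! 3 with A
        rw [inv_mul_eq_div, le_div_iff₀' (by positivity)]
        exact_mod_cast Iff.rfl
    _ ≤ exp (N * binEntropy ((2 : ℝ) ^ a)⁻¹) :=
        card_filter_card_le_mul_le_exp_binEntropy α (by positivity) hp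
    _ ≤ exp (N * (log 2 * ((a + 2) / 2 ^ a))) := by gcongr
    _ = 2 ^ ((a + 2) / 2 ^ a * N : ℝ) := by
        rw [rpow_def_of_pos two_pos]
        ring_nf

end SmallSets

lemma card_filter_exists_superset_le {α : Type*} [Fintype α] [DecidableEq α]
    (𝒟 : Finset (Finset α)) {m : ℝ} (hm : ∀ D ∈ 𝒟, m ≤ #D) :
    (#{S : Finset α | ∃ D ∈ 𝒟, D ⊆ S} : ℝ) ≤ #𝒟 * 2 ^ (Fintype.card α - m) := by
  have hIcc : ∀ D ∈ 𝒟, (#(Icc D univ) : ℝ) ≤ 2 ^ (Fintype.card α - m) := fun D hD ↦ by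
    rw [card_Icc_finset (subset_univ D), card_univ, Nat.cast_pow, Nat.cast_two, ← rpow_natCast,
      Nat.cast_sub (card_le_univ D)]
    gcongr
    exacts [one_le_two, hm D hD]
  calc (#{S : Finset α | ∃ D ∈ 𝒟, D ⊆ S} : ℝ) = #(𝒟.biUnion fun D ↦ Icc D univ) := by
        congr 2
        ext S
        simp
    _ ≤ ∑ D ∈ 𝒟, (#(Icc D univ) : ℝ) := mod_cast card_biUnion_le
    _ ≤ #𝒟 * 2 ^ (Fintype.card α - m) := by
        rw [← nsmul_eq_mul]
        exact sum_le_card_nsmul _ _ _ hIcc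

section Fingerprints

variable {G : Type*} [Add G] [DecidableEq G]

lemma sum_card_singleton_add_inter_le [IsRightCancelAdd G] (A X U : Finset G) :
    ∑ f ∈ A, #(({f} + X) ∩ U) ≤ #X * #U := by
  calc ∑ f ∈ A, #(({f} + X) ∩ U) ≤ ∑ f ∈ A, #{x ∈ X | f + x ∈ U} := by
        refine sum_le_sum fun f _ ↦ ?_
        rw [singleton_add, ← filter_mem_eq_inter, ← image_vadd, filter_image]
        exact card_image_le
    _ = ∑ x ∈ X, #{f ∈ A | f + x ∈ U} :=
        sum_card_bipartiteAbove_eq_sum_card_bipartiteBelow fun f x ↦ f + x ∈ U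
    _ ≤ ∑ _x ∈ X, #U :=
        sum_le_sum fun x _ ↦ card_le_card_of_injOn (· + x)
          (fun f hf ↦ (mem_filter.1 hf).2) (add_left_injective x).injOn
    _ = #X * #U := by rw [sum_const, smul_eq_mul]

lemma exists_card_mul_card_singleton_add_inter_le [IsRightCancelAdd G] {A : Finset G}
    (hA : A.Nonempty) (X U : Finset G) :
    ∃ f ∈ A, #A * #(({f} + X) ∩ U) ≤ #X * #U := by
  by_contra! h
  have hsum := sum_lt_sum_of_nonempty hA h
  rw [sum_const, smul_eq_mul, ← mul_sum] at hsum
  exact (lt_of_mul_lt_mul_left' hsum).not_ge (sum_card_singleton_add_inter_le A X U)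

variable [IsCancelAdd G]

lemma exists_subset_min_le_two_mul_card_add (A X : Finset G) (n : ℕ) :
    ∃ F ⊆ A, #F ≤ n ∧ min #A (n * #X) ≤ 2 * #(F + X) := by
  induction n with
  | zero => exact ⟨∅, by simp⟩
  | succ n ih =>
    obtain ⟨F, hFA, hFn, hF⟩ := ih
    obtain hAF | hFlt := le_or_gt #A (2 * #(F + X))
    · exact ⟨F, hFA, by omega, (min_le_left _ _).trans hAF⟩
    have hApos : 0 < #A := by omega
    obtain ⟨f, hfA, hf⟩ :=
      exists_card_mul_card_singleton_add_inter_le (card_pos.1 hApos) X (F + X)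
    have hhalf : 2 * #(({f} + X) ∩ (F + X)) ≤ #X := by
      refine le_of_mul_le_mul_left ?_ hApos
      calc #A * (2 * #(({f} + X) ∩ (F + X))) = 2 * (#A * #(({f} + X) ∩ (F + X))) := by ring
        _ ≤ 2 * (#X * #(F + X)) := by gcongr
        _ = #X * (2 * #(F + X)) := by ring
        _ ≤ #X * #A := by gcongr
        _ = #A * #X := mul_comm _ _
    have hunion : #(insert f F + X) + #(({f} + X) ∩ (F + X)) = #X + #(F + X) := by
      rw [insert_eq, union_add, card_union_add_card_inter, card_singleton_add]
    refine ⟨insert f F, insert_subset hfA hFA, (card_insert_le f F).trans (by omega), ?_⟩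
    rw [add_one_mul]
    omega

lemma exists_subset_card_le_sqrt_card_le_two_mul_card_add_self (A : Finset G) :
    ∃ D ⊆ A, #D ≤ 2 * (#A).sqrt + 2 ∧ #A ≤ 2 * #(D + D) := by
  obtain ⟨X, hXA, hX⟩ := exists_subset_card_eq (#A).sqrt_le_self
  obtain ⟨F, hFA, hFcard, hF⟩ := exists_subset_min_le_two_mul_card_add A X ((#A).sqrt + 2)
  have hA : #A ≤ ((#A).sqrt + 2) * #X := by
    rw [hX]
    linarith [(#A).sqrt_le_add]
  refine ⟨F ∪ X, union_subset hFA hXA, (card_union_le F X).trans (by omega), ?_⟩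
  calc #A ≤ 2 * #(F + X) := (min_eq_left hA).symm.trans_le hF
    _ ≤ 2 * #((F ∪ X) + (F ∪ X)) := by
      gcongr
      exacts [subset_union_left, subset_union_right]

lemma exists_subset_two_pow_mul_card_le_and_card_le_two_mul_card_add_self [Fintype G] {a : ℕ}
    (hG : 2 ^ (2 * a + 4) ≤ Fintype.card G) (A : Finset G) :
    ∃ D ⊆ A, 2 ^ a * #D ≤ Fintype.card G ∧ #A ≤ 2 * #(D + D) := by
  obtain ⟨D, hDA, hDcard, hD⟩ := exists_subset_card_le_sqrt_card_le_two_mul_card_add_self A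
  set s := (Fintype.card G).sqrt
  have hAs : (#A).sqrt ≤ s := Nat.sqrt_le_sqrt (card_le_univ A)
  have hs : 2 ^ (a + 2) ≤ s := Nat.le_sqrt'.2 (by rwa [← pow_mul, add_mul, mul_comm a])
  refine ⟨D, hDA, ?_, hD⟩
  calc 2 ^ a * #D ≤ 2 ^ a * (2 * s + 2) := by gcongr; omega
    _ ≤ 2 ^ a * (4 * s) := by
      gcongr
      linarith [Nat.one_le_two_pow.trans hs]
    _ = 2 ^ (a + 2) * s := by ring
    _ ≤ s * s := by gcongr
    _ ≤ Fintype.card G := (Fintype.card G).sqrt_le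

end Fingerprints

section UnionsOfSumsets

variable (G : Type*) [Add G] [Fintype G] [DecidableEq G]

lemma ncard_unions_of_two_small_sumsets_le {a : ℕ} (ha : a ≠ 0) :
    ({S : Finset G | ∃ A B : Finset G, 2 ^ a * #A ≤ Fintype.card G ∧
      2 ^ a * #B ≤ Fintype.card G ∧ S = (A + A) ∪ (B + B)}.ncard : ℝ) ≤
      2 ^ (2 * ((a + 2) / 2 ^ a) * Fintype.card G : ℝ) := by
  set 𝒜 : Finset (Finset G) := {A | 2 ^ a * #A ≤ Fintype.card G}
  have himage : {S : Finset G | ∃ A B : Finset G, 2 ^ a * #A ≤ Fintype.card G ∧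
      2 ^ a * #B ≤ Fintype.card G ∧ S = (A + A) ∪ (B + B)} =
      (𝒜 ×ˢ 𝒜).image fun P ↦ (P.1 + P.1) ∪ (P.2 + P.2) := by
    ext S
    simp [𝒜, and_assoc, eq_comm]
  rw [himage, Set.ncard_coe_finset]
  calc (#((𝒜 ×ˢ 𝒜).image fun P ↦ (P.1 + P.1) ∪ (P.2 + P.2)) : ℝ) ≤ (#𝒜 : ℝ) ^ 2 := by
        rw [sq, ← Nat.cast_mul, ← card_product]
        exact_mod_cast card_image_le
    _ ≤ (2 ^ ((a + 2) / 2 ^ a * Fintype.card G : ℝ)) ^ 2 := by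
        gcongr
        exact card_filter_two_pow_mul_card_le G ha
    _ = 2 ^ (2 * ((a + 2) / 2 ^ a) * Fintype.card G : ℝ) := by
        rw [← rpow_mul_natCast two_pos.le]
        ring_nf

variable {G} [IsCancelAdd G]

lemma ncard_containing_large_sumset_le {a b : ℕ} (ha : a ≠ 0)
    (hG : 2 ^ (2 * a + 4) ≤ Fintype.card G) :
    ({S : Finset G | ∃ A : Finset G, Fintype.card G ≤ 2 ^ b * #A ∧ A + A ⊆ S}.ncard : ℝ) ≤
      2 ^ (Fintype.card G - (1 / 2 ^ (b + 1) - (a + 2) / 2 ^ a) * Fintype.card G : ℝ) := by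
  set N := Fintype.card G
  set 𝒜 : Finset (Finset G) := {D | 2 ^ a * #D ≤ N}
  set 𝒟 : Finset (Finset G) := {E ∈ 𝒜.image fun D ↦ D + D | N ≤ 2 ^ (b + 1) * #E}
  have hsub : {S : Finset G | ∃ A : Finset G, N ≤ 2 ^ b * #A ∧ A + A ⊆ S} ⊆
      ({S : Finset G | ∃ E ∈ 𝒟, E ⊆ S} : Finset (Finset G)) := by
    rintro S ⟨A, hA, hAS⟩
    obtain ⟨D, hDA, hDcard, hD⟩ :=
      exists_subset_two_pow_mul_card_le_and_card_le_two_mul_card_add_self hG A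
    have hDD : N ≤ 2 ^ (b + 1) * #(D + D) := by
      rw [pow_succ, mul_assoc]
      exact hA.trans (by gcongr)
    have hD𝒟 : D + D ∈ 𝒟 :=
      mem_filter.2 ⟨mem_image_of_mem _ (mem_filter.2 ⟨mem_univ D, hDcard⟩), hDD⟩
    exact mem_filter.2 ⟨mem_univ S, D + D, hD𝒟, (add_subset_add hDA hDA).trans hAS⟩
  have h𝒟 : ∀ E ∈ 𝒟, (N / 2 ^ (b + 1) : ℝ) ≤ #E := fun E hE ↦ by
    rw [div_le_iff₀' (by positivity)]
    exact_mod_cast (mem_filter.1 hE).2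
  have h𝒟card : #𝒟 ≤ #𝒜 := (card_filter_le _ _).trans card_image_le
  calc ({S : Finset G | ∃ A : Finset G, N ≤ 2 ^ b * #A ∧ A + A ⊆ S}.ncard : ℝ)
      ≤ #{S : Finset G | ∃ E ∈ 𝒟, E ⊆ S} := by
        rw [← Set.ncard_coe_finset]
        exact_mod_cast Set.ncard_le_ncard hsub
    _ ≤ #𝒟 * 2 ^ (N - N / 2 ^ (b + 1) : ℝ) := card_filter_exists_superset_le 𝒟 h𝒟
    _ ≤ 2 ^ ((a + 2) / 2 ^ a * N : ℝ) * 2 ^ (N - N / 2 ^ (b + 1) : ℝ) := by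
        gcongr
        exact (Nat.cast_le.2 h𝒟card).trans (card_filter_two_pow_mul_card_le G ha)
    _ = 2 ^ (N - (1 / 2 ^ (b + 1) - (a + 2) / 2 ^ a) * N : ℝ) := by
        rw [← rpow_add two_pos]
        ring_nf

theorem count_unions_of_two_sumsets_general (hG : 2 ^ 24 ≤ Fintype.card G) :
    ({S : Finset G | ∃ A B : Finset G, S = (A + A) ∪ (B + B)}.ncard : ℝ) ≤
      2 ^ ((Fintype.card G : ℝ) - (Fintype.card G : ℝ) / 64) := by
  set N := Fintype.card G
  have hN : (2 : ℝ) ^ 24 ≤ N := mod_cast hG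
  set 𝒮 := {S : Finset G | ∃ A B : Finset G, 2 ^ 4 * #A ≤ N ∧ 2 ^ 4 * #B ≤ N ∧
    S = (A + A) ∪ (B + B)}
  set ℒ := {S : Finset G | ∃ A : Finset G, N ≤ 2 ^ 4 * #A ∧ A + A ⊆ S}
  have hcover : {S : Finset G | ∃ A B : Finset G, S = (A + A) ∪ (B + B)} ⊆ 𝒮 ∪ ℒ := by
    rintro S ⟨A, B, rfl⟩
    obtain hA | hA := le_total N (2 ^ 4 * #A)
    · exact Or.inr ⟨A, hA, subset_union_left⟩
    obtain hB | hB := le_total N (2 ^ 4 * #B)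
    · exact Or.inr ⟨B, hB, subset_union_right⟩
    exact Or.inl ⟨A, B, hA, hB, rfl⟩
  -- The exponent savings are `1 / 4` and `1 / 32 - 12 / 1024 = 5 / 256`, both above `1 / 64`.
  have h𝒮 : (𝒮.ncard : ℝ) ≤ 2 ^ (N - N / 64 - 1 : ℝ) := by
    refine (ncard_unions_of_two_small_sumsets_le G four_ne_zero).trans <|
      rpow_le_rpow_of_exponent_le one_le_two ?_
    push_cast
    linarith
  have hℒ : (ℒ.ncard : ℝ) ≤ 2 ^ (N - N / 64 - 1 : ℝ) := by
    refine (ncard_containing_large_sumset_le (a := 10) (by norm_num) hG).trans <|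
      rpow_le_rpow_of_exponent_le one_le_two ?_
    push_cast
    linarith
  calc ({S : Finset G | ∃ A B : Finset G, S = (A + A) ∪ (B + B)}.ncard : ℝ)
      ≤ 𝒮.ncard + ℒ.ncard :=
        mod_cast (Set.ncard_le_ncard hcover).trans (Set.ncard_union_le 𝒮 ℒ)
    _ ≤ 2 ^ (N - N / 64 - 1 : ℝ) + 2 ^ (N - N / 64 - 1 : ℝ) := add_le_add h𝒮 hℒ
    _ = 2 ^ (N - N / 64 : ℝ) := by
        rw [← mul_two, ← rpow_add_one two_ne_zero, sub_add_cancel]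

end UnionsOfSumsets

end

/-- There exists `N₀` such that for every finite abelian group `G` of order
`N ≥ N₀`, the number of subsets of `G` expressible as a union of two sumsets
is at most `2^(N − N/200)`. -/
theorem count_unions_of_two_sumsets :
    ∃ N₀ : ℕ, ∀ (G : Type) [AddCommGroup G] [Fintype G] [DecidableEq G],
      N₀ ≤ Fintype.card G →
      ({S : Finset G | ∃ A B : Finset G, S = (A + A) ∪ (B + B)}.ncard : ℝ) ≤
        2 ^ ((Fintype.card G : ℝ) - (Fintype.card G : ℝ) / 200) :=
  ⟨2 ^ 24, fun _ _ _ _ hG ↦ (count_unions_of_two_sumsets_general hG).trans <| by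
    gcongr <;> norm_num⟩
end

section
/- Let G be an abelian group and let A be a nonempty finite subset of G. Then there exists a subset A' ⊆ A with |A'|² ≥ |A| (i.e., |A'| ≥ √|A|) such that A' has many sums, namely |A'+A'| ≥ |A'|²/4. -/
open Pointwise

/-!
Grow `A'` greedily from a singleton. Given `S ⊆ A` with `|S| = k`, each `s ∈ S` has at most
`|S + S|` many `x` with `x + s ∈ S + S`, so some `x ∈ A \ S` has at most
`k |S + S| / |A \ S|` coincidences `x + s ∈ S + S`, and adjoining it produces at least
`k - k |S + S| / |A \ S|` new sums. As long as `k² < |A|`, this preserves the bound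
`|S + S| ≥ k² / 4`, and the process stops at the first `k` with `k² ≥ |A|`.
-/

section

open Finset

variable {G : Type*} [Add G] [DecidableEq G]

theorem exists_mem_card_mul_card_filter_add_mem_le [IsRightCancelAdd G] {B : Finset G}
    (hB : B.Nonempty) (S C : Finset G) :
    ∃ x ∈ B, #B * #{s ∈ S | x + s ∈ C} ≤ #S * #C := by
  obtain ⟨x, hx, hmin⟩ := B.exists_min_image (fun x ↦ #{s ∈ S | x + s ∈ C}) hB
  refine ⟨x, hx, card_mul_le_card_mul (fun y s ↦ y + s ∈ C) hmin fun s _ ↦ ?_⟩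
  exact card_le_card_of_injOn (· + s) (fun y hy ↦ (mem_filter.mp hy).2)
    (add_left_injective s).injOn

theorem card_insert_add_add_card_filter [IsLeftCancelAdd G] (x : G) (S T : Finset G) :
    #(insert x S + T) + #{t ∈ T | x + t ∈ S + T} = #(S + T) + #T := by
  have card_inter : #(({x} + T) ∩ (S + T)) = #{t ∈ T | x + t ∈ S + T} := by
    rw [← filter_mem_eq_inter, singleton_add, ← image_vadd, filter_image]
    exact card_image_of_injective _ (add_right_injective x)
  rw [insert_eq, union_add, ← card_inter, card_union_add_card_inter, card_singleton_add, add_comm]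

theorem exists_mem_card_mul_card_add_add_card_le [IsCancelAdd G] {B : Finset G}
    (hB : B.Nonempty) (S T : Finset G) :
    ∃ x ∈ B, #B * (#(S + T) + #T) ≤ #B * #(insert x S + T) + #T * #(S + T) := by
  obtain ⟨x, hx, few_coincidences⟩ := exists_mem_card_mul_card_filter_add_mem_le hB T (S + T)
  refine ⟨x, hx, ?_⟩
  rw [← card_insert_add_add_card_filter x S T, mul_add]
  gcongr

theorem add_one_sq_le_four_mul_of_growth {R : Type*} [CommRing R] [LinearOrder R]
    [IsStrictOrderedRing R] {k d f f' : R} (hk : 1 ≤ k) (hd : k ^ 2 + 1 ≤ d + k)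
    (hf : k ^ 2 ≤ 4 * f) (growth : d * (f + k) ≤ d * f' + k * f) :
    (k + 1) ^ 2 ≤ 4 * f' := by
  have k_le_d : k ≤ d := by linarith [sq_nonneg (k - 1)]
  have d_pos : 0 < d := by linarith
  -- Inserting `d = k ^ 2 - k + 1` into `(2 * k - 1) * d - k ^ 3` leaves `(k - 1) ^ 3`.
  have cube_le : k ^ 3 ≤ (2 * k - 1) * d := by
    have : (2 * k - 1) * (k ^ 2 - k + 1) ≤ (2 * k - 1) * d :=
      mul_le_mul_of_nonneg_left (by linarith) (by linarith)
    linarith [pow_nonneg (sub_nonneg.mpr hk) 3]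
  refine le_of_mul_le_mul_left ?_ d_pos
  calc d * (k + 1) ^ 2
      = (d - k) * k ^ 2 + 4 * d * k + (k ^ 3 - (2 * k - 1) * d) := by ring
    _ ≤ (d - k) * k ^ 2 + 4 * d * k := by linarith
    _ ≤ (d - k) * (4 * f) + 4 * d * k := by gcongr
    _ = 4 * (d * (f + k) - k * f) := by ring
    _ ≤ d * (4 * f') := by linarith

variable [IsCancelAdd G] {A S : Finset G}

theorem exists_insert_sq_card_le_four_mul_card_add (hSA : S ⊆ A) (hS : S.Nonempty)
    (hcard : #S ^ 2 < #A) (hsums : #S ^ 2 ≤ 4 * #(S + S)) :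
    ∃ x ∈ A \ S, (#S + 1) ^ 2 ≤ 4 * #(insert x S + insert x S) := by
  have card_sdiff_add : #(A \ S) + #S = #A := card_sdiff_add_card_eq_card hSA
  have sdiff_nonempty : (A \ S).Nonempty :=
    sdiff_nonempty_of_card_lt_card ((Nat.le_self_pow two_ne_zero _).trans_lt hcard)
  obtain ⟨x, hx, growth⟩ := exists_mem_card_mul_card_add_add_card_le sdiff_nonempty S S
  have many_sums : (#S + 1) ^ 2 ≤ 4 * #(insert x S + S) := by
    have hd : #S ^ 2 + 1 ≤ #(A \ S) + #S := by omega
    zify at hd hsums growth ⊢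
    exact add_one_sq_le_four_mul_of_growth (mod_cast hS.card_pos) hd hsums growth
  refine ⟨x, hx, many_sums.trans ?_⟩
  gcongr
  exact subset_insert x S

theorem exists_subset_card_eq_sq_le_four_mul_card_add {k : ℕ} (hk : k ^ 2 < #A) :
    ∃ T ⊆ A, #T = k + 1 ∧ #T ^ 2 ≤ 4 * #(T + T) := by
  induction k with
  | zero =>
    obtain ⟨a, ha⟩ : A.Nonempty := card_pos.mp (by simpa using hk)
    exact ⟨{a}, by simpa using ha, by simp, by simp⟩
  | succ k ih =>
    obtain ⟨S, hSA, hS, hsums⟩ := ih (lt_of_le_of_lt (by gcongr; exact k.le_succ) hk)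
    obtain ⟨x, hx, hsums'⟩ := exists_insert_sq_card_le_four_mul_card_add hSA
      (card_pos.mp (hS ▸ k.succ_pos)) (hS ▸ hk) hsums
    obtain ⟨hxA, hxS⟩ := mem_sdiff.mp hx
    have card_insert : #(insert x S) = #S + 1 := card_insert_of_notMem hxS
    exact ⟨insert x S, insert_subset hxA hSA, by rw [card_insert, hS], by rwa [card_insert]⟩

theorem exists_subset_with_many_sums_general (A : Finset G) :
    ∃ A' ⊆ A, #A ≤ #A' ^ 2 ∧ (#A' ^ 2 : ℝ) / 4 ≤ (#(A' + A') : ℝ) := by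
  obtain rfl | hA := A.eq_empty_or_nonempty
  · exact ⟨∅, by simp⟩
  obtain ⟨n, hn⟩ : ∃ n, #A = n + 1 := Nat.exists_eq_add_one.mpr hA.card_pos
  obtain ⟨T, hTA, hT, hsums⟩ := exists_subset_card_eq_sq_le_four_mul_card_add (A := A)
    (k := n.sqrt) (hn ▸ Nat.lt_succ_of_le n.sqrt_le')
  refine ⟨T, hTA, ?_, ?_⟩
  · rw [hn, hT]
    exact n.lt_succ_sqrt'
  · rw [div_le_iff₀' (by norm_num)]
    exact_mod_cast hsums

end

/-- Every nonempty finite subset `A` of an abelian group contains a subset `A'`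
with `|A'| ≥ √|A|` that has many sums: `|A' + A'| ≥ |A'|²/4`. -/
theorem exists_subset_with_many_sums
    {G : Type*} [AddCommGroup G] [DecidableEq G]
    (A : Finset G) (hA : A.Nonempty) :
    ∃ A' ⊆ A, A.card ≤ A'.card ^ 2 ∧
      (A'.card ^ 2 : ℝ) / 4 ≤ ((A' + A').card : ℝ) :=
  exists_subset_with_many_sums_general A
end

section
/- Let G be a finite abelian group of order N and let s be an integer with s ≥ 64·(log₂ N)². Then the number of subsets S ⊆ G for which there exists a set A ⊆ G of size |A| = s with A+A ⊆ S is at most 2^(N − s/8). Equivalently, a uniformly random subset S of G contains the sumset of some s-element set with probability at most 2^(−s/8). -/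
open Pointwise

/-!
Fingerprints: every finite set `A` contains a set `F` of only `⌊√|A|⌋` elements with
`|A| ≤ 4 |F + F|`. It is built greedily. As long as `|A| > 4 |F + F|`, double counting the pairs
`(a, f) ∈ A × F` with `a + f ∈ F + F` yields some `a ∈ A` for which at least three quarters of the
sums `a + f` are new, so after `n` steps `F + F` has at least `n (n + 2) / 4` elements; and
`t (t + 2) ≥ |A|` for `t = ⌊√|A|⌋`. A set `S` containing `A + A` then contains `F + F`. There are at
most `N ^ √s` choices for `F`, and at most `2 ^ (N - s / 4)` choices for `S` given `F`. Finally
`N ^ √s ≤ 2 ^ (s / 8)` because `√s ≥ 8 log₂ N`.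
-/

section

open Finset

lemma card_Icc_univ_eq_rpow {α : Type*} [Fintype α] [DecidableEq α] (T : Finset α) :
    (#(Icc T univ) : ℝ) = 2 ^ ((Fintype.card α : ℝ) - #T) := by
  rw [card_Icc_finset (subset_univ T), card_univ, ← Nat.cast_sub (card_le_univ T),
    Real.rpow_natCast]
  norm_cast

variable {G : Type*} [Add G] [DecidableEq G]

lemma sum_card_filter_add_mem_le [IsRightCancelAdd G] (A F D : Finset G) :
    ∑ a ∈ A, #{f ∈ F | a + f ∈ D} ≤ #F * #D :=
  calc ∑ a ∈ A, #{f ∈ F | a + f ∈ D}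
      = ∑ f ∈ F, #{a ∈ A | a + f ∈ D} :=
        sum_card_bipartiteAbove_eq_sum_card_bipartiteBelow fun a f ↦ a + f ∈ D
    _ ≤ #F * #D := by
        refine sum_le_card_nsmul _ _ _ fun f _ ↦ ?_
        exact card_le_card_of_injOn (· + f) (fun a ha ↦ (mem_filter.mp ha).2)
          (add_left_injective f).injOn

lemma card_add_self_add_card_filter_notMem_le [IsLeftCancelAdd G] (F : Finset G) (a : G) :
    #(F + F) + #{f ∈ F | a + f ∉ F + F} ≤ #(insert a F + insert a F) := by
  set newSums := image (a + ·) {f ∈ F | a + f ∉ F + F}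
  have hdisj : Disjoint (F + F) newSums :=
    disjoint_right.mpr (forall_mem_image.mpr fun f hf ↦ (mem_filter.mp hf).2)
  have hnew : newSums ⊆ insert a F + insert a F := image_subset_iff.mpr fun f hf ↦
    add_mem_add (mem_insert_self a F) (mem_insert_of_mem (mem_filter.mp hf).1)
  have hold : F + F ⊆ insert a F + insert a F :=
    add_subset_add (subset_insert a F) (subset_insert a F)
  calc #(F + F) + #{f ∈ F | a + f ∉ F + F}
      = #(F + F ∪ newSums) := by
        rw [card_union_of_disjoint hdisj, card_image_of_injective _ (add_right_injective a)]
    _ ≤ #(insert a F + insert a F) := card_le_card (union_subset hold hnew)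

lemma exists_notMem_four_mul_card_add_self_insert_ge [IsCancelAdd G] {A F : Finset G}
    (h : 4 * #(F + F) < #A) :
    ∃ a ∈ A, a ∉ F ∧ 4 * #(F + F) + 3 * #F ≤ 4 * #(insert a F + insert a F) := by
  have havg : ∑ a ∈ A, 4 * #{f ∈ F | a + f ∈ F + F} ≤ ∑ _a ∈ A, #F := by
    rw [← mul_sum, sum_const, smul_eq_mul]
    nlinarith [sum_card_filter_add_mem_le A F (F + F)]
  obtain ⟨a, haA, ha⟩ := exists_le_of_sum_le (card_pos.mp (by omega)) havg
  refine ⟨a, haA, fun haF ↦ ?_, ?_⟩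
  · have hall : {f ∈ F | a + f ∈ F + F} = F := filter_true_of_mem fun f hf ↦ add_mem_add haF hf
    have hF : 0 < #F := card_pos.mpr ⟨a, haF⟩
    rw [hall] at ha
    omega
  · have hsplit := card_filter_add_card_filter_not (s := F) (fun f ↦ a + f ∈ F + F)
    have hnew := card_add_self_add_card_filter_notMem_le F a
    omega

lemma exists_subset_card_eq_min_le_four_mul_card_add_self [IsCancelAdd G] (A : Finset G) {n : ℕ}
    (hn : n ≤ #A) : ∃ F ⊆ A, #F = n ∧ min #A (n * (n + 2)) ≤ 4 * #(F + F) := by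
  induction n with
  | zero => exact ⟨∅, by simp⟩
  | succ n ih =>
    obtain ⟨F, hFA, rfl, hF⟩ := ih (by omega)
    by_cases hlarge : #A ≤ 4 * #(F + F)
    · obtain ⟨F', hFF', hF'A, hF'⟩ := exists_subsuperset_card_eq hFA (Nat.le_succ _) hn
      refine ⟨F', hF'A, hF', (min_le_left _ _).trans (hlarge.trans ?_)⟩
      gcongr
    · have hquad : #F * (#F + 2) ≤ 4 * #(F + F) := (min_le_iff.mp hF).resolve_left hlarge
      obtain ⟨a, haA, haF, ha⟩ :=
        exists_notMem_four_mul_card_add_self_insert_ge (not_le.mp hlarge)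
      refine ⟨insert a F, insert_subset haA hFA, card_insert_of_notMem haF,
        (min_le_right _ _).trans ?_⟩
      have hpos : 0 < #(insert a F + insert a F) :=
        ((insert_nonempty a F).add (insert_nonempty a F)).card_pos
      -- For `#F < 3` the bound `ha` suffices only after rounding up to a multiple of 4.
      generalize #F = n at *
      obtain hsmall | hbig := lt_or_ge n 3
      · interval_cases n <;> omega
      · nlinarith

variable [Fintype G]

variable (G) in
/-- The fingerprints of the `s`-element sets: subsets of `G` of the small size `⌊√s⌋` whose sumset
nevertheless has at least `s / 4` elements. -/
def fingerprints (s : ℕ) : Finset (Finset G) :=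
  {F ∈ powersetCard s.sqrt univ | s ≤ 4 * #(F + F)}

lemma exists_mem_fingerprints_subset [IsCancelAdd G] (A : Finset G) :
    ∃ F ∈ fingerprints G #A, F ⊆ A := by
  obtain ⟨F, hFA, hcard, hF⟩ :=
    exists_subset_card_eq_min_le_four_mul_card_add_self A (Nat.sqrt_le_self #A)
  have hsqrt : #A ≤ (#A).sqrt * ((#A).sqrt + 2) := by linarith [Nat.sqrt_le_add #A]
  rw [min_eq_left hsqrt] at hF
  exact ⟨F, mem_filter.mpr ⟨mem_powersetCard_univ.mpr hcard, hF⟩, hFA⟩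

variable (G) in
lemma card_fingerprints_le (s : ℕ) : #(fingerprints G s) ≤ Fintype.card G ^ s.sqrt :=
  calc #(fingerprints G s)
      ≤ #(powersetCard s.sqrt (univ : Finset G)) := card_filter_le _ _
    _ = (Fintype.card G).choose s.sqrt := by rw [card_powersetCard, card_univ]
    _ ≤ Fintype.card G ^ s.sqrt := Nat.choose_le_pow _ _

variable (G) in
lemma ncard_sets_containing_sumset_le [IsCancelAdd G] (s : ℕ) :
    ({S : Finset G | ∃ A : Finset G, #A = s ∧ A + A ⊆ S}.ncard : ℝ) ≤
      (Fintype.card G : ℝ) ^ s.sqrt * 2 ^ ((Fintype.card G : ℝ) - s / 4) := by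
  have hcover : {S : Finset G | ∃ A : Finset G, #A = s ∧ A + A ⊆ S} ⊆
      ((fingerprints G s).biUnion fun F ↦ Icc (F + F) univ : Finset (Finset G)) := by
    rintro S ⟨A, rfl, hAS⟩
    obtain ⟨F, hF, hFA⟩ := exists_mem_fingerprints_subset A
    exact mem_biUnion.mpr
      ⟨F, hF, mem_Icc.mpr ⟨(add_subset_add hFA hFA).trans hAS, subset_univ S⟩⟩
  have hsupersets : ∀ F ∈ fingerprints G s,
      (#(Icc (F + F) univ) : ℝ) ≤ 2 ^ ((Fintype.card G : ℝ) - s / 4) := by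
    intro F hF
    have hs : (s : ℝ) ≤ 4 * #(F + F) := mod_cast (mem_filter.mp hF).2
    rw [card_Icc_univ_eq_rpow]
    exact Real.rpow_le_rpow_of_exponent_le one_le_two (by linarith)
  calc ({S : Finset G | ∃ A : Finset G, #A = s ∧ A + A ⊆ S}.ncard : ℝ)
      ≤ ∑ F ∈ fingerprints G s, (#(Icc (F + F) univ) : ℝ) := by
        have hncard := Set.ncard_le_ncard hcover (finite_toSet _)
        rw [Set.ncard_coe_finset] at hncard
        exact_mod_cast hncard.trans card_biUnion_le
    _ ≤ #(fingerprints G s) * 2 ^ ((Fintype.card G : ℝ) - s / 4) := by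
        simpa only [nsmul_eq_mul] using sum_le_card_nsmul _ _ _ hsupersets
    _ ≤ (Fintype.card G : ℝ) ^ s.sqrt * 2 ^ ((Fintype.card G : ℝ) - s / 4) := by
        gcongr
        exact_mod_cast card_fingerprints_le G s

end

lemma pow_sqrt_le_two_rpow {x : ℝ} (hx : 0 < x) {s : ℕ}
    (hs : 64 * Real.logb 2 x ^ 2 ≤ s) : x ^ s.sqrt ≤ 2 ^ ((s : ℝ) / 8) := by
  have hsqrt : (s.sqrt : ℝ) ^ 2 ≤ s := mod_cast Nat.sqrt_le' s
  calc x ^ s.sqrt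
      = 2 ^ (Real.logb 2 x * s.sqrt) := by
        rw [Real.rpow_mul zero_le_two, Real.rpow_logb two_pos (by norm_num) hx, Real.rpow_natCast]
    _ ≤ 2 ^ ((s : ℝ) / 8) := by
        refine Real.rpow_le_rpow_of_exponent_le one_le_two ?_
        linarith [two_mul_le_add_sq (8 * Real.logb 2 x) s.sqrt]

theorem count_sets_containing_sumset_general {G : Type*} [Add G] [IsCancelAdd G] [Nonempty G]
    [Fintype G] [DecidableEq G] {s : ℕ} (hs : 64 * Real.logb 2 (Fintype.card G) ^ 2 ≤ s) :
    ({S : Finset G | ∃ A : Finset G, A.card = s ∧ A + A ⊆ S}.ncard : ℝ) ≤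
      2 ^ ((Fintype.card G : ℝ) - s / 8) :=
  have hG : (0 : ℝ) < Fintype.card G := mod_cast Fintype.card_pos
  calc ({S : Finset G | ∃ A : Finset G, A.card = s ∧ A + A ⊆ S}.ncard : ℝ)
      ≤ (Fintype.card G : ℝ) ^ s.sqrt * 2 ^ ((Fintype.card G : ℝ) - s / 4) :=
        ncard_sets_containing_sumset_le G s
    _ ≤ 2 ^ ((s : ℝ) / 8) * 2 ^ ((Fintype.card G : ℝ) - s / 4) := by
        gcongr
        exact pow_sqrt_le_two_rpow hG hs
    _ = 2 ^ ((Fintype.card G : ℝ) - s / 8) := by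
        rw [← Real.rpow_add two_pos]
        ring_nf

/-- Let `G` be a finite abelian group of order `N` and let `s` be an integer with
`s ≥ 64·(log₂ N)²`. Then the number of subsets `S ⊆ G` containing the sumset of
some `s`-element set is at most `2^(N − s/8)`. -/
theorem count_sets_containing_sumset
    (G : Type) [AddCommGroup G] [Fintype G] [DecidableEq G]
    (N : ℕ) (hN : N = Fintype.card G)
    (s : ℕ) (hs : 64 * (Real.logb 2 N) ^ 2 ≤ (s : ℝ)) :
    ({S : Finset G | ∃ A : Finset G, A.card = s ∧ A + A ⊆ S}.ncard : ℝ) ≤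
      2 ^ ((N : ℝ) - s / 8) := by
  subst hN
  exact count_sets_containing_sumset_general hs
end

section
/- Let k : ℕ → ℕ be any function with k(n) → ∞ as n → ∞. Then for every ε > 0 there exists n₀ such that for all n ≥ n₀, the number of independent sets I in the hypercube graph Qₙ with min{|I ∩ ℰ|, |I ∩ 𝒪|} > k(n) is at most ε · 2^(2^(n−1)). -/
/-- The hypercube graph `Qₙ`: `x` and `y` are adjacent iff `x + y` has Hamming
weight `1` (equivalently, the Hamming distance of `x` and `y` is `1`). -/
def Q (n : ℕ) : SimpleGraph (V n) :=
  SimpleGraph.fromRel (fun x y => hammingDist x y = 1)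

/-- `ℰ`: the vectors of even Hamming weight. -/
def evens (n : ℕ) : Finset (V n) :=
  Finset.univ.filter (fun x => Even (hammingNorm x))

/-- `𝒪`: the vectors of odd Hamming weight. -/
def odds (n : ℕ) : Finset (V n) :=
  Finset.univ.filter (fun x => Odd (hammingNorm x))

/-!
The hypercube is regular and bipartite with classes `X`, `Y` of size `2 ^ (n - 1)`, and an
independent set with trace `A` on `X` avoids `N(A)` on `Y`. The independent sets whose trace on `X`
belongs to a family `𝒜` therefore number at most `2 ^ #Y * ∑ A ∈ 𝒜, 2 ^ (-#N(A))`. Of the two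
traces of an independent set at least one has a closure `[A] = {x | N(x) ⊆ N(A)}` occupying at most
half of its class, so it suffices to bound the weighted sum over such `A` with more than `k`
elements.

Splitting `A` into 2-linked components with disjoint neighbourhoods reduces the sum to two
contributions: sets of isolated points, which have total weight `O(2 ^ (-k))` because a point weighs
`2 ^ (-n)` and there are `2 ^ (n - 1)` of them, and 2-linked sets with at least two elements.
If a 2-linked `A` is small, `#N(A)` is so close to `n * #A` that counting walks in the cube
suffices. If it is large, Talagrand's isoperimetric inequality gives `#N(A) - #[A] ≥ #[A] / (4√n)`,
and the method of Sapozhenko approximates `A` by containers that are determined by a sparse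
6-linked set of vertices; there are few of these, so the number of such `A` with `#N(A) = g` is far
below `2 ^ g`.
-/

namespace BalancedIndepSets

open Finset

section Neighbourhoods

variable {α : Type*} [Fintype α] [DecidableEq α] (G : SimpleGraph α) [DecidableRel G.Adj]

/-- The neighbourhood `N(A)` of a set of vertices: all vertices adjacent to a member of `A`. -/
def nbhd (A : Finset α) : Finset α := A.biUnion fun x => G.neighborFinset x

/-- The closure `[A]` of a set of vertices: all vertices whose neighbours lie in `N(A)`. When `A`
lies in one class of a bipartite graph without isolated vertices, so does `[A]`. -/
def nbhdClosure (A : Finset α) : Finset α := {x | G.neighborFinset x ⊆ nbhd G A}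

variable {G} {A B S T X Y : Finset α} {x y : α} {d : ℕ}

lemma mem_nbhd : y ∈ nbhd G A ↔ ∃ x ∈ A, G.Adj x y := by simp [nbhd]

lemma mem_nbhdClosure : x ∈ nbhdClosure G A ↔ G.neighborFinset x ⊆ nbhd G A := by
  simp [nbhdClosure]

lemma nbhd_mono (h : A ⊆ B) : nbhd G A ⊆ nbhd G B := biUnion_subset_biUnion_of_subset_left _ h

lemma nbhd_union (A B : Finset α) : nbhd G (A ∪ B) = nbhd G A ∪ nbhd G B := union_biUnion

lemma neighborFinset_subset_nbhd (hx : x ∈ A) : G.neighborFinset x ⊆ nbhd G A :=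
  subset_biUnion_of_mem (fun x => G.neighborFinset x) hx

lemma subset_nbhdClosure : A ⊆ nbhdClosure G A := fun _ hx =>
  mem_nbhdClosure.2 (neighborFinset_subset_nbhd hx)

lemma nbhd_nbhdClosure (A : Finset α) : nbhd G (nbhdClosure G A) = nbhd G A :=
  (biUnion_subset.2 fun _ hx => mem_nbhdClosure.1 hx).antisymm (nbhd_mono subset_nbhdClosure)

lemma nbhdClosure_mono (h : A ⊆ B) : nbhdClosure G A ⊆ nbhdClosure G B := fun _ hx =>
  mem_nbhdClosure.2 ((mem_nbhdClosure.1 hx).trans (nbhd_mono h))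

lemma sum_card_neighborFinset_inter_comm (S T : Finset α) :
    ∑ x ∈ S, #(G.neighborFinset x ∩ T) = ∑ y ∈ T, #(G.neighborFinset y ∩ S) := by
  have above (x : α) : G.neighborFinset x ∩ T = bipartiteAbove G.Adj T x := by
    ext; simp [bipartiteAbove, and_comm]
  have below (y : α) : G.neighborFinset y ∩ S = bipartiteBelow G.Adj S y := by
    ext; simp [bipartiteBelow, and_comm, G.adj_comm]
  simpa only [above, below] using sum_card_bipartiteAbove_eq_sum_card_bipartiteBelow G.Adj

lemma sum_card_neighborFinset_inter_of_subset (hd : G.IsRegularOfDegree d)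
    (h : ∀ x ∈ S, G.neighborFinset x ⊆ T) : ∑ x ∈ S, #(G.neighborFinset x ∩ T) = #S * d := by
  rw [← smul_eq_mul, ← sum_const]
  refine sum_congr rfl fun x hx => ?_
  rw [inter_eq_left.2 (h x hx), G.card_neighborFinset_eq_degree, hd x]

lemma sum_card_neighborFinset_inter_le (hd : G.IsRegularOfDegree d) (S T : Finset α) :
    ∑ x ∈ S, #(G.neighborFinset x ∩ T) ≤ #T * d := by
  rw [sum_card_neighborFinset_inter_comm, ← smul_eq_mul]
  refine sum_le_card_nsmul _ _ _ fun y _ => (card_le_card inter_subset_left).trans ?_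
  rw [G.card_neighborFinset_eq_degree, hd y]

lemma card_le_card_nbhd (hd : G.IsRegularOfDegree d) (hd₀ : 0 < d) (A : Finset α) :
    #A ≤ #(nbhd G A) := by
  refine Nat.le_of_mul_le_mul_right (c := d) ?_ hd₀
  rw [← sum_card_neighborFinset_inter_of_subset hd fun _ hx => neighborFinset_subset_nbhd hx]
  exact sum_card_neighborFinset_inter_le hd _ _

lemma card_nbhdClosure_le_card_nbhd (hd : G.IsRegularOfDegree d) (hd₀ : 0 < d) (A : Finset α) :
    #(nbhdClosure G A) ≤ #(nbhd G A) := by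
  simpa only [nbhd_nbhdClosure] using card_le_card_nbhd hd hd₀ (nbhdClosure G A)

lemma sum_sq_card_neighborFinset_inter (A T : Finset α) :
    ∑ y ∈ T, #(G.neighborFinset y ∩ A) ^ 2 =
      ∑ x ∈ A, ∑ x' ∈ A, #(G.neighborFinset x ∩ G.neighborFinset x' ∩ T) := by
  have count (x x' : α) : #(G.neighborFinset x ∩ G.neighborFinset x' ∩ T) =
      ∑ y ∈ T, if G.Adj x y ∧ G.Adj x' y then 1 else 0 := by
    rw [← card_filter]
    congr 1
    grind [SimpleGraph.mem_neighborFinset]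
  have degree (y : α) : #(G.neighborFinset y ∩ A) = ∑ x ∈ A, if G.Adj x y then 1 else 0 := by
    rw [← card_filter]
    congr 1
    ext
    simp [and_comm, G.adj_comm]
  simp_rw [count, degree, sq, sum_mul_sum, ite_zero_mul_ite_zero, mul_one]
  rw [sum_comm]
  exact sum_congr rfl fun _ _ => sum_comm

/-- Cauchy–Schwarz applied to the degrees into `A` of the vertices of `N(A)`, which add up to
`d * #A`. -/
lemma sq_mul_card_le_card_nbhd_mul (hd : G.IsRegularOfDegree d) {c : ℕ}
    (hc : ∀ ⦃x y⦄, x ≠ y → #(G.neighborFinset x ∩ G.neighborFinset y) ≤ c) (A : Finset α) :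
    d ^ 2 * #A ≤ #(nbhd G A) * (d + c * (#A - 1)) := by
  obtain rfl | hA := A.eq_empty_or_nonempty
  · simp
  have total : ∑ y ∈ nbhd G A, #(G.neighborFinset y ∩ A) = #A * d := by
    rw [← sum_card_neighborFinset_inter_comm,
      sum_card_neighborFinset_inter_of_subset hd fun _ hx => neighborFinset_subset_nbhd hx]
  have row : ∀ x ∈ A, ∑ x' ∈ A, #(G.neighborFinset x ∩ G.neighborFinset x' ∩ nbhd G A) ≤
      d + c * (#A - 1) := by
    intro x hx
    rw [← add_sum_erase _ _ hx, inter_self, mul_comm, ← card_erase_of_mem hx, ← smul_eq_mul]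
    gcongr
    · rw [← hd x, ← G.card_neighborFinset_eq_degree]
      exact card_le_card inter_subset_left
    · exact sum_le_card_nsmul _ _ _ fun x' hx' =>
        (card_le_card inter_subset_left).trans (hc (ne_of_mem_erase hx').symm)
  refine Nat.le_of_mul_le_mul_left ?_ hA.card_pos
  calc #A * (d ^ 2 * #A) = (∑ y ∈ nbhd G A, #(G.neighborFinset y ∩ A)) ^ 2 := by
        rw [total]; ring
    _ ≤ #(nbhd G A) * ∑ y ∈ nbhd G A, #(G.neighborFinset y ∩ A) ^ 2 := sq_sum_le_card_mul_sum_sq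
    _ ≤ #(nbhd G A) * (#A * (d + c * (#A - 1))) := by
        rw [sum_sq_card_neighborFinset_inter, ← smul_eq_mul (a := #A)]
        gcongr
        exact sum_le_card_nsmul _ _ _ row
    _ = #A * (#(nbhd G A) * (d + c * (#A - 1))) := by ring

end Neighbourhoods

section Bipartite

variable {α : Type*} [Fintype α] [DecidableEq α] {G : SimpleGraph α} [DecidableRel G.Adj]
  {X Y A : Finset α} {d : ℕ}

lemma nbhd_subset_of_isBipartiteWith (hXY : G.IsBipartiteWith X Y) (hA : A ⊆ X) :
    nbhd G A ⊆ Y :=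
  biUnion_subset.2 fun _ hx => SimpleGraph.isBipartiteWith_neighborFinset_subset hXY (hA hx)

variable (hXY : G.IsBipartiteWith X Y) (hd : G.IsRegularOfDegree d) (hd₀ : 0 < d)
include hXY hd hd₀

lemma nbhdClosure_subset_of_isBipartiteWith (hA : A ⊆ X) : nbhdClosure G A ⊆ X := by
  intro x hx
  obtain ⟨y, hy⟩ : (G.neighborFinset x).Nonempty := by
    rwa [← card_pos, G.card_neighborFinset_eq_degree, hd x]
  obtain ⟨z, hz, hzy⟩ := mem_nbhd.1 (mem_nbhdClosure.1 hx hy)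
  have hyY : y ∈ (Y : Set α) := nbhd_subset_of_isBipartiteWith hXY hA (mem_nbhd.2 ⟨z, hz, hzy⟩)
  exact hXY.symm.mem_of_mem_adj hyY ((G.mem_neighborFinset _ _).1 hy).symm

omit [DecidableEq α] in
lemma two_mul_card_eq_of_isBipartiteWith : 2 * #X = Fintype.card α := by
  classical
  have card_eq : #X = #Y := by
    have sums := SimpleGraph.isBipartiteWith_sum_degrees_eq hXY
    simp only [hd.degree_eq, sum_const, smul_eq_mul] at sums
    exact Nat.eq_of_mul_eq_mul_right hd₀ sums
  have cover : X ∪ Y = univ := by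
    refine eq_univ_of_forall fun x => ?_
    obtain ⟨y, hy⟩ : (G.neighborFinset x).Nonempty := by
      rwa [← card_pos, G.card_neighborFinset_eq_degree, hd x]
    have hxy := hXY.mem_of_adj ((G.mem_neighborFinset _ _).1 hy)
    simp only [mem_coe] at hxy
    grind
  rw [← card_univ, ← cover, card_union_of_disjoint (disjoint_coe.1 hXY.disjoint), ← card_eq,
    two_mul]

end Bipartite

section LinkedSets

variable {α : Type*} (G : SimpleGraph α)

/-- A `k`-step inside `A`: both ends lie in `A`, at distance at most `k` in `G`. -/
def LinkStep (k : ℕ) (A : Finset α) (x y : α) : Prop := x ∈ A ∧ y ∈ A ∧ G.edist x y ≤ k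

/-- A set of vertices is `k`-linked if any two of its members are joined by a chain of members
whose consecutive terms are at distance at most `k`. The empty set is `k`-linked. -/
def IsLinked (k : ℕ) (A : Finset α) : Prop :=
  ∀ x ∈ A, ∀ y ∈ A, Relation.ReflTransGen (LinkStep G k A) x y

variable {G} {k : ℕ} {A C T U : Finset α} {x y z : α}

lemma LinkStep.symm (h : LinkStep G k A x y) : LinkStep G k A y x :=
  ⟨h.2.1, h.1, G.edist_comm ▸ h.2.2⟩

instance : Std.Symm (LinkStep G k A) := ⟨fun _ _ => LinkStep.symm⟩

lemma LinkStep.mono (h : LinkStep G k A x y) (hAC : A ⊆ C) : LinkStep G k C x y :=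
  ⟨hAC h.1, hAC h.2.1, h.2.2⟩

lemma edist_le_two_of_adj_of_adj (hxz : G.Adj x z) (hyz : G.Adj y z) : G.edist x y ≤ 2 := by
  calc G.edist x y ≤ G.edist x z + G.edist z y := G.edist_triangle
    _ ≤ 2 := by
      rw [SimpleGraph.edist_eq_one_iff_adj.2 hxz, SimpleGraph.edist_eq_one_iff_adj.2 hyz.symm,
        one_add_one_eq_two]

lemma IsLinked.of_near (hU : IsLinked G k U) (hUT : U ⊆ T)
    (near : ∀ x ∈ T, ∃ u ∈ U, G.edist x u ≤ k) : IsLinked G k T := by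
  intro x hx y hy
  obtain ⟨u, hu, hxu⟩ := near x hx
  obtain ⟨v, hv, hyv⟩ := near y hy
  exact .head ⟨hx, hUT hu, hxu⟩ <|
    .tail (Relation.ReflTransGen.mono (fun _ _ h => LinkStep.mono h hUT) _ _ (hU u hu v hv))
      (LinkStep.symm ⟨hy, hUT hv, hyv⟩)

lemma IsLinked.thin (hC : IsLinked G k C) {r : ℕ} (hUC : U ⊆ C)
    (near : ∀ x ∈ C, ∃ u ∈ U, G.edist x u ≤ r) : IsLinked G (k + 2 * r) U := by
  intro u hu v hv
  have reach {c} (hc : Relation.ReflTransGen (LinkStep G k C) u c) :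
      ∀ w ∈ U, G.edist c w ≤ r → Relation.ReflTransGen (LinkStep G (k + 2 * r) U) u w := by
    induction hc with
    | refl => exact fun w hw huw => .single ⟨hu, hw, huw.trans (by norm_cast; omega)⟩
    | @tail b c _ hbc ih =>
      intro w hw hcw
      obtain ⟨z, hz, hbz⟩ := near b hbc.1
      refine (ih z hz hbz).tail ⟨hz, hw, ?_⟩
      calc G.edist z w ≤ G.edist z b + (G.edist b c + G.edist c w) :=
            G.edist_triangle.trans (add_le_add_right G.edist_triangle _)
        _ ≤ r + (k + r) := add_le_add (G.edist_comm ▸ hbz) (add_le_add hbc.2.2 hcw)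
        _ = (k + 2 * r : ℕ) := by norm_cast; omega
  exact reach (hC u (hUC hu) v (hUC hv)) v hv (by simp)

lemma IsLinked.exists_edist_le (hT : IsLinked G k T) (hUT : U ⊂ T) (hU : U.Nonempty) :
    ∃ x ∈ U, ∃ y ∈ T, y ∉ U ∧ G.edist x y ≤ k := by
  by_contra! far
  obtain ⟨x, hx⟩ := hU
  refine hUT.not_subset fun y hy => ?_
  have path := hT x (hUT.subset hx) y hy
  clear hy
  induction path with
  | refl => exact hx
  | tail _ step ih => exact by_contra fun h => (far _ ih _ step.2.1 h).not_ge step.2.2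

end LinkedSets

section Counting

variable {α : Type*} [Fintype α] [DecidableEq α] (G : SimpleGraph α)

/-- The closed ball of radius `k` about a vertex, in the graph distance. -/
noncomputable def ball (k : ℕ) (x : α) : Finset α :=
  open scoped Classical in {y | G.edist x y ≤ k}

/-- The sets of vertices visited by the sequences of length `l + 1` starting at the given vertex,
whose consecutive terms are at distance at most `k`. -/
noncomputable def walkSupports (k : ℕ) : ℕ → α → Finset (Finset α)
  | 0, x => {{x}}
  | l + 1, x => (ball G k x).biUnion fun y => (walkSupports k l y).image (insert x)

/-- The nonempty `k`-linked sets with at most `m` members. -/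
noncomputable def linkedSets (k m : ℕ) : Finset (Finset α) :=
  open scoped Classical in {T | T.Nonempty ∧ IsLinked G k T ∧ #T ≤ m}

variable {G} {k l m : ℕ} {S T : Finset α} {x y z : α}

omit [DecidableEq α] in
lemma mem_ball : y ∈ ball G k x ↔ G.edist x y ≤ k := by simp [ball]

omit [DecidableEq α] in
lemma mem_linkedSets : T ∈ linkedSets G k m ↔ T.Nonempty ∧ IsLinked G k T ∧ #T ≤ m := by
  simp [linkedSets]

omit [DecidableEq α] in
lemma card_ball_le [DecidableRel G.Adj] {d : ℕ} (hd : ∀ x, G.degree x ≤ d) (k : ℕ) (x : α) :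
    #(ball G k x) ≤ (d + 1) ^ k := by
  classical
  induction k generalizing x with
  | zero =>
    have : ball G 0 x = {x} := by
      ext y
      simp [mem_ball, eq_comm (a := y)]
    simp [this]
  | succ k ih =>
    have cover : ball G (k + 1) x ⊆
        (insert x (G.neighborFinset x)).biUnion fun y => ball G k y := by
      intro y hy
      obtain ⟨p, hp⟩ := G.exists_walk_of_edist_ne_top (u := x) (v := y)
        (ne_top_of_le_ne_top (ENat.natCast_ne_top _) (mem_ball.1 hy))
      rw [mem_ball, ← hp, Nat.cast_le] at hy
      rw [mem_biUnion]
      cases p with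
      | nil => exact ⟨x, mem_insert_self _ _, by simp [mem_ball]⟩
      | @cons _ z _ hxz q =>
        refine ⟨z, mem_insert_of_mem (by simpa using hxz), mem_ball.2 (q.edist_le.trans ?_)⟩
        simpa using hy
    calc #(ball G (k + 1) x) ≤ #(insert x (G.neighborFinset x)) * (d + 1) ^ k :=
          (card_le_card cover).trans (card_biUnion_le_card_mul _ _ _ fun y _ => ih y)
      _ ≤ (d + 1) ^ (k + 1) := by
          rw [pow_succ']
          gcongr
          exact (card_insert_le _ _).trans (Nat.succ_le_succ (hd x))

lemma mem_walkSupports_succ (hyT : T ∈ walkSupports G k l y) (hxy : G.edist x y ≤ k) :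
    insert x T ∈ walkSupports G k (l + 1) x :=
  mem_biUnion.2 ⟨y, mem_ball.2 hxy, mem_image_of_mem _ hyT⟩

lemma mem_of_mem_walkSupports (hT : T ∈ walkSupports G k l x) : x ∈ T := by
  cases l with
  | zero => simp_all [walkSupports]
  | succ l =>
    simp only [walkSupports, mem_biUnion, mem_image] at hT
    obtain ⟨_, _, _, _, rfl⟩ := hT
    exact mem_insert_self _ _

lemma walkSupports_mono {l' : ℕ} (h : l ≤ l') : walkSupports G k l x ⊆ walkSupports G k l' x := by
  induction l', h using Nat.le_induction with
  | base => rfl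
  | succ l' _ ih =>
    intro T hT
    have wait := mem_walkSupports_succ (ih hT) (x := x) (by simp)
    rwa [insert_eq_of_mem (mem_of_mem_walkSupports hT)] at wait

/-- The walk makes a detour `z, y, z` at its visit to `z`. -/
lemma insert_mem_walkSupports (hT : T ∈ walkSupports G k l x) (hz : z ∈ T)
    (hzy : G.edist z y ≤ k) : insert y T ∈ walkSupports G k (l + 2) x := by
  have detour {l : ℕ} {S : Finset α} (hS : S ∈ walkSupports G k l z) :
      insert y S ∈ walkSupports G k (l + 2) z := by
    have := mem_walkSupports_succ (mem_walkSupports_succ hS (G.edist_comm ▸ hzy)) hzy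
    rwa [insert_eq_of_mem (mem_insert_of_mem (mem_of_mem_walkSupports hS))] at this
  by_cases hzx : z = x
  · exact hzx ▸ detour (hzx ▸ hT)
  induction l generalizing x T with
  | zero => simp_all [walkSupports]
  | succ l ih =>
    simp only [walkSupports, mem_biUnion, mem_image] at hT
    obtain ⟨w, hw, S, hS, rfl⟩ := hT
    have hzS : z ∈ S := mem_of_mem_insert_of_ne hz hzx
    rw [insert_comm]
    refine mem_walkSupports_succ ?_ (mem_ball.1 hw)
    by_cases hzw : z = w
    · exact hzw ▸ detour (hzw ▸ hS)
    · exact ih hS hzS hzw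

lemma card_walkSupports_le {B : ℕ} (hB : ∀ x, #(ball G k x) ≤ B) (l : ℕ) (x : α) :
    #(walkSupports G k l x) ≤ B ^ l := by
  induction l generalizing x with
  | zero => simp [walkSupports]
  | succ l ih =>
    rw [walkSupports, pow_succ']
    exact (card_biUnion_le_card_mul _ _ _ fun y _ => card_image_le.trans (ih y)).trans
      (Nat.mul_le_mul_right _ (hB x))

lemma IsLinked.exists_mem_walkSupports (hT : IsLinked G k T) (hx : x ∈ T) {s : ℕ}
    (hs : s < #T) : ∃ S ⊆ T, #S = s + 1 ∧ S ∈ walkSupports G k (2 * s) x := by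
  induction s with
  | zero => exact ⟨{x}, by simpa, by simp, by simp [walkSupports]⟩
  | succ s ih =>
    obtain ⟨S, hST, hSs, hS⟩ := ih (by omega)
    obtain ⟨z, hz, y, hyT, hyS, hzy⟩ := hT.exists_edist_le
      (hST.ssubset_of_ne (by rintro rfl; omega)) ⟨x, mem_of_mem_walkSupports hS⟩
    exact ⟨insert y S, insert_subset hyT hST, by rw [card_insert_of_notMem hyS, hSs],
      insert_mem_walkSupports hS hz hzy⟩

omit [DecidableEq α] in
/-- A linked set `T` is the support of a walk of length `2(#T - 1)`. -/
lemma card_linkedSets_le [DecidableRel G.Adj] {d : ℕ} (hd : ∀ x, G.degree x ≤ d) (k m : ℕ) :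
    #(linkedSets G k m) ≤ Fintype.card α * ((d + 1) ^ k) ^ (2 * m) := by
  classical
  have cover : linkedSets G k m ⊆ univ.biUnion (walkSupports G k (2 * m)) := by
    intro T hT
    obtain ⟨⟨x, hx⟩, linked, hTm⟩ := mem_linkedSets.1 hT
    obtain ⟨S, hST, hSs, hS⟩ :=
      linked.exists_mem_walkSupports hx (s := #T - 1) (by have := card_pos.2 ⟨x, hx⟩; omega)
    obtain rfl : S = T := eq_of_subset_of_card_le hST (by omega)
    exact mem_biUnion.2 ⟨x, mem_univ _, walkSupports_mono (by omega) hS⟩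
  exact (card_le_card cover).trans <|
    card_biUnion_le_card_mul _ _ _ fun x _ => card_walkSupports_le (card_ball_le hd k) _ x

end Counting

section Approximation

variable {α : Type*} [Fintype α] [DecidableEq α] (G : SimpleGraph α) [DecidableRel G.Adj]

/-- Sapozhenko's `ψ`-approximating pairs: `S` is an outer approximation of the closure of `A` and
`F` an inner approximation of its neighbourhood, such that every vertex of `S` has few neighbours
outside `F` and every vertex outside `F` has few neighbours in `S`. -/
structure IsApproximatingPair (ψ : ℕ) (A S F : Finset α) : Prop where
  nbhdClosure_subset : nbhdClosure G A ⊆ S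
  subset_nbhd : F ⊆ nbhd G A
  card_sdiff_le : ∀ x ∈ S, #(G.neighborFinset x \ F) ≤ ψ
  card_inter_le : ∀ y ∉ F, #(G.neighborFinset y ∩ S) ≤ ψ

/-- The vertices with at most `ψ` neighbours outside `N(U)`. -/
def almostCovered (ψ : ℕ) (U : Finset α) : Finset α := {x | #(G.neighborFinset x \ nbhd G U) ≤ ψ}

/-- The outer set of the approximating pair encoded by the certificate `(U, W)`. -/
def outerApprox (ψ : ℕ) (U W : Finset α) : Finset α := almostCovered G ψ U \ nbhd G W

/-- The inner set of the approximating pair encoded by the certificate `(U, W)`. -/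
def innerApprox (ψ : ℕ) (U W : Finset α) : Finset α :=
  nbhd G U ∪ ({y | ψ < #(G.neighborFinset y ∩ outerApprox G ψ U W)} : Finset α)

variable {G} {A F R S U W X Y Z : Finset α} {x : α} {d k t ψ : ℕ}

lemma mem_almostCovered :
    x ∈ almostCovered G ψ U ↔ #(G.neighborFinset x \ nbhd G U) ≤ ψ := by
  simp [almostCovered]

section Cardinality

variable (hd : G.IsRegularOfDegree d) (hd₀ : 0 < d) (hψ : 2 * ψ ≤ d)
  (ht : #(nbhd G A) = #(nbhdClosure G A) + t)
include hd hd₀ hψ ht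

lemma card_sdiff_nbhdClosure_le (hR : ∀ x ∈ R, #(G.neighborFinset x \ nbhd G A) ≤ ψ) :
    #(R \ nbhdClosure G A) ≤ 2 * t := by
  have edges : #(nbhdClosure G A) * d + ∑ x ∈ R \ nbhdClosure G A,
      #(G.neighborFinset x ∩ nbhd G A) ≤ #(nbhd G A) * d := by
    rw [← sum_card_neighborFinset_inter_of_subset hd fun _ hx => mem_nbhdClosure.1 hx,
      ← sum_union disjoint_sdiff]
    exact sum_card_neighborFinset_inter_le hd _ _
  have many : #(R \ nbhdClosure G A) * (d - ψ) ≤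
      ∑ x ∈ R \ nbhdClosure G A, #(G.neighborFinset x ∩ nbhd G A) := by
    rw [← smul_eq_mul]
    refine card_nsmul_le_sum _ _ _ fun x hx => ?_
    have split := card_inter_add_card_sdiff (G.neighborFinset x) (nbhd G A)
    rw [G.card_neighborFinset_eq_degree, hd x] at split
    have := hR x (mem_sdiff.1 hx).1
    omega
  have half : #(R \ nbhdClosure G A) * d ≤ #(R \ nbhdClosure G A) * (2 * (d - ψ)) :=
    Nat.mul_le_mul_left _ (by omega)
  rw [ht] at edges
  exact Nat.le_of_mul_le_mul_right (c := d) (by linarith) hd₀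

variable (hp : IsApproximatingPair G ψ A S F)
include hp

lemma IsApproximatingPair.card_nbhd_sdiff_le : #(nbhd G A \ F) ≤ 2 * t := by
  have edges : #(nbhdClosure G A) * d ≤ #(nbhd G A \ F) * ψ + #F * d := by
    rw [← sum_card_neighborFinset_inter_of_subset hd fun _ hx => mem_nbhdClosure.1 hx,
      sum_card_neighborFinset_inter_comm, ← sum_sdiff hp.subset_nbhd]
    gcongr
    · rw [← smul_eq_mul]
      exact sum_le_card_nsmul _ _ _ fun y hy => (card_le_card
        (inter_subset_inter_left hp.nbhdClosure_subset)).trans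
          (hp.card_inter_le y (mem_sdiff.1 hy).2)
    · rw [sum_card_neighborFinset_inter_comm]
      exact sum_card_neighborFinset_inter_le hd _ _
  have split := card_sdiff_add_card_eq_card hp.subset_nbhd
  have half : #(nbhd G A \ F) * (2 * ψ) ≤ #(nbhd G A \ F) * d := Nat.mul_le_mul_left _ hψ
  refine Nat.le_of_mul_le_mul_right (c := d) ?_ hd₀
  nlinarith [congrArg (· * d) (split.trans ht)]

lemma IsApproximatingPair.card_mul_le : #S * d ≤ #F * d + 4 * ψ * t := by
  have split : #S * d = ∑ x ∈ S, #(G.neighborFinset x ∩ F) +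
      ∑ x ∈ S, #(G.neighborFinset x ∩ (nbhd G A \ F)) +
      ∑ x ∈ S, #(G.neighborFinset x \ nbhd G A) := by
    rw [← sum_add_distrib, ← sum_add_distrib, ← smul_eq_mul, ← sum_const]
    refine sum_congr rfl fun x _ => ?_
    rw [← hd x, ← G.card_neighborFinset_eq_degree,
      ← card_inter_add_card_sdiff (G.neighborFinset x) (nbhd G A),
      ← card_inter_add_card_sdiff (G.neighborFinset x ∩ nbhd G A) F, inter_assoc,
      inter_eq_right.2 hp.subset_nbhd, inter_sdiff_assoc]
  have missed : ∑ x ∈ S, #(G.neighborFinset x ∩ (nbhd G A \ F)) ≤ 2 * t * ψ := by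
    rw [sum_card_neighborFinset_inter_comm]
    refine (sum_le_card_nsmul _ _ ψ fun y hy => hp.card_inter_le y (mem_sdiff.1 hy).2).trans ?_
    exact Nat.mul_le_mul_right _ (hp.card_nbhd_sdiff_le hd hd₀ hψ ht)
  have few (x) (hx : x ∈ S) : #(G.neighborFinset x \ nbhd G A) ≤ ψ :=
    (card_le_card (sdiff_subset_sdiff Subset.rfl hp.subset_nbhd)).trans (hp.card_sdiff_le x hx)
  have outside : ∑ x ∈ S, #(G.neighborFinset x \ nbhd G A) ≤ 2 * t * ψ := by
    rw [← sum_sdiff hp.nbhdClosure_subset, sum_eq_zero (s := nbhdClosure G A) fun x hx => by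
      simpa [sdiff_eq_empty_iff_subset] using mem_nbhdClosure.1 hx, add_zero]
    refine (sum_le_card_nsmul _ _ ψ fun x hx => few x (mem_sdiff.1 hx).1).trans ?_
    exact Nat.mul_le_mul_right _ (card_sdiff_nbhdClosure_le hd hd₀ hψ ht few)
  linarith [sum_card_neighborFinset_inter_le hd S F]

lemma IsApproximatingPair.card_le_sub_or_card_sdiff_le {δ : ℕ} (hδ : 4 * ψ * t ≤ d * δ) :
    #S ≤ #(nbhd G A) - δ ∨ #(nbhd G A \ F) ≤ 2 * δ := by
  have close : #S ≤ #F + δ := by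
    refine Nat.le_of_mul_le_mul_right (c := d) ?_ hd₀
    linarith [hp.card_mul_le hd hd₀ hψ ht]
  have split := card_sdiff_add_card_eq_card hp.subset_nbhd
  omega

end Cardinality

lemma exists_greedy_cover (G : SimpleGraph α) [DecidableRel G.Adj] (X Y : Finset α) (ψ : ℕ) :
    ∃ U ⊆ X, #U * ψ ≤ #(nbhd G U ∩ Y) ∧
      ∀ x ∈ X, #((G.neighborFinset x ∩ Y) \ nbhd G U) ≤ ψ := by
  obtain ⟨U, hU, maximal⟩ := exists_max_image
    {U ∈ X.powerset | #U * ψ ≤ #(nbhd G U ∩ Y)} card ⟨∅, by simp⟩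
  rw [mem_filter, mem_powerset] at hU
  refine ⟨U, hU.1, hU.2, fun x hx => ?_⟩
  by_contra! gain
  have hxU : x ∉ U := by
    intro hxU
    rw [sdiff_eq_empty_iff_subset.2 (inter_subset_left.trans (neighborFinset_subset_nbhd hxU)),
      card_empty] at gain
    omega
  have nbhd_insert : nbhd G (insert x U) ∩ Y =
      nbhd G U ∩ Y ∪ (G.neighborFinset x ∩ Y) \ nbhd G U := by
    rw [nbhd, biUnion_insert, ← nbhd]
    grind
  have disj : Disjoint (nbhd G U ∩ Y) ((G.neighborFinset x ∩ Y) \ nbhd G U) :=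
    disjoint_sdiff.mono_left inter_subset_left
  have bigger := maximal (insert x U) <| by
    rw [mem_filter, mem_powerset, nbhd_insert, card_union_of_disjoint disj,
      card_insert_of_notMem hxU, add_mul, one_mul]
    exact ⟨insert_subset hx hU.1, by omega⟩
  rw [card_insert_of_notMem hxU] at bigger
  omega

lemma isApproximatingPair_of_cover (hU : U ⊆ nbhdClosure G A)
    (hUψ : nbhdClosure G A ⊆ almostCovered G ψ U) (hW : Disjoint W (nbhd G A))
    (hWψ : ∀ y ∉ nbhd G A, #((G.neighborFinset y ∩ almostCovered G ψ U) \ nbhd G W) ≤ ψ) :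
    IsApproximatingPair G ψ A (outerApprox G ψ U W) (innerApprox G ψ U W) where
  nbhdClosure_subset x hx := by
    refine mem_sdiff.2 ⟨hUψ hx, fun hxW => ?_⟩
    obtain ⟨w, hw, hwx⟩ := mem_nbhd.1 hxW
    exact disjoint_left.1 hW hw (mem_nbhdClosure.1 hx (by simpa using hwx.symm))
  subset_nbhd := by
    refine union_subset ((nbhd_mono hU).trans (nbhd_nbhdClosure A).subset) fun y hy => ?_
    by_contra hyA
    have few := hWψ y hyA
    rw [inter_sdiff_assoc, ← outerApprox] at few
    exact few.not_gt (by simpa using hy)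
  card_sdiff_le x hx := (card_le_card (sdiff_subset_sdiff Subset.rfl subset_union_left)).trans
    (mem_almostCovered.1 (mem_sdiff.1 hx).1)
  card_inter_le y hy := by simp_all [innerApprox]

lemma IsLinked.nbhdClosure (hd : G.IsRegularOfDegree d) (hd₀ : 0 < d) (hA : IsLinked G 2 A) :
    IsLinked G 2 (nbhdClosure G A) := by
  refine hA.of_near subset_nbhdClosure fun x hx => ?_
  obtain ⟨y, hy⟩ : (G.neighborFinset x).Nonempty := by
    rwa [← card_pos, G.card_neighborFinset_eq_degree, hd x]
  obtain ⟨u, hu, huy⟩ := mem_nbhd.1 (mem_nbhdClosure.1 hx hy)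
  exact ⟨u, hu, edist_le_two_of_adj_of_adj (by simpa using hy) huy⟩

section Certificates

variable (hd : G.IsRegularOfDegree d) (hψ : ψ < d)
include hd hψ

lemma exists_adj_of_mem_almostCovered (hx : x ∈ almostCovered G ψ U) :
    ∃ u ∈ U, ∃ y, G.Adj x y ∧ G.Adj u y := by
  obtain ⟨y, hyx, hyU⟩ : ∃ y ∈ G.neighborFinset x, y ∈ nbhd G U := by
    by_contra! h
    have few := mem_almostCovered.1 hx
    rw [sdiff_eq_self_of_disjoint (disjoint_left.2 h), G.card_neighborFinset_eq_degree,
      hd x] at few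
    omega
  obtain ⟨u, hu, huy⟩ := mem_nbhd.1 hyU
  exact ⟨u, hu, y, by simpa using hyx, huy⟩

lemma exists_edist_le_two_of_mem_almostCovered (hx : x ∈ almostCovered G ψ U) :
    ∃ u ∈ U, G.edist x u ≤ 2 := by
  obtain ⟨u, hu, y, hxy, huy⟩ := exists_adj_of_mem_almostCovered hd hψ hx
  exact ⟨u, hu, edist_le_two_of_adj_of_adj hxy huy⟩

lemma almostCovered_subset_of_isBipartiteWith (hXY : G.IsBipartiteWith X Y) (hU : U ⊆ X) :
    almostCovered G ψ U ⊆ X := by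
  intro x hx
  obtain ⟨u, hu, y, hxy, huy⟩ := exists_adj_of_mem_almostCovered hd hψ hx
  exact hXY.symm.mem_of_mem_adj (hXY.mem_of_mem_adj (hU hu) huy) hxy.symm

lemma IsLinked.union_of_adj_almostCovered (hU : IsLinked G 6 U)
    (hZ : ∀ z ∈ Z, ∃ x ∈ almostCovered G ψ U, G.Adj x z) : IsLinked G 6 (U ∪ Z) := by
  refine hU.of_near subset_union_left fun z hz => ?_
  obtain hz | hz := mem_union.1 hz
  · exact ⟨z, hz, by simp⟩
  obtain ⟨x, hx, hxz⟩ := hZ z hz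
  obtain ⟨u, hu, hxu⟩ := exists_edist_le_two_of_mem_almostCovered hd hψ hx
  refine ⟨u, hu, ?_⟩
  calc G.edist z u ≤ G.edist z x + G.edist x u := G.edist_triangle
    _ ≤ 1 + 2 := add_le_add (SimpleGraph.edist_eq_one_iff_adj.2 hxz.symm).le hxu
    _ ≤ (6 : ℕ) := by norm_cast

lemma union_mem_linkedSets {m : ℕ} (hU₀ : U.Nonempty) (hU : IsLinked G 6 U)
    (hZ : ∀ z ∈ Z, ∃ x ∈ almostCovered G ψ U, G.Adj x z) (hm : #U + #Z ≤ m) :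
    U ∪ Z ∈ linkedSets G 6 m :=
  mem_linkedSets.2 ⟨hU₀.mono subset_union_left, hU.union_of_adj_almostCovered hd hψ hZ,
    (card_union_le _ _).trans hm⟩

end Certificates

lemma exists_isApproximatingPair (hd : G.IsRegularOfDegree d) (hd₀ : 0 < d) (hψ : 2 * ψ ≤ d)
    (hA : A.Nonempty) (linked : IsLinked G 2 A) (ht : #(nbhd G A) = #(nbhdClosure G A) + t) :
    ∃ U W, U ⊆ nbhdClosure G A ∧ U.Nonempty ∧ IsLinked G 6 U ∧
      nbhdClosure G A ⊆ almostCovered G ψ U ∧ (∀ w ∈ W, ∃ x ∈ almostCovered G ψ U, G.Adj x w) ∧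
      (#U + #W) * ψ ≤ #(nbhd G A) + 2 * t ∧
      IsApproximatingPair G ψ A (outerApprox G ψ U W) (innerApprox G ψ U W) := by
  obtain ⟨U, hU, hUcard, hUψ⟩ := exists_greedy_cover G (nbhdClosure G A) univ ψ
  simp only [inter_univ] at hUcard hUψ
  have hUA : nbhd G U ⊆ nbhd G A := (nbhd_mono hU).trans (nbhd_nbhdClosure A).subset
  have covered : nbhdClosure G A ⊆ almostCovered G ψ U := fun x hx =>
    mem_almostCovered.2 (hUψ x hx)
  have near (x) (hx : x ∈ nbhdClosure G A) : ∃ u ∈ U, G.edist x u ≤ 2 :=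
    exists_edist_le_two_of_mem_almostCovered hd (by omega) (covered hx)
  obtain ⟨W, hW, hWcard, hWψ⟩ := exists_greedy_cover G
    {y | y ∉ nbhd G A ∧ (G.neighborFinset y ∩ almostCovered G ψ U).Nonempty}
    (almostCovered G ψ U) ψ
  have hWA : ∀ w ∈ W, w ∉ nbhd G A := fun w hw => (mem_filter.1 (hW hw)).2.1
  have few : #(nbhd G W ∩ almostCovered G ψ U) ≤ 2 * t := by
    refine (card_le_card fun x hx => ?_).trans <|
      card_sdiff_nbhdClosure_le hd hd₀ hψ ht (R := almostCovered G ψ U) fun x hx =>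
        (card_le_card (sdiff_subset_sdiff Subset.rfl hUA)).trans (mem_almostCovered.1 hx)
    obtain ⟨hxW, hx⟩ := mem_inter.1 hx
    obtain ⟨w, hw, hwx⟩ := mem_nbhd.1 hxW
    exact mem_sdiff.2 ⟨hx, fun hxA =>
      hWA w hw (mem_nbhdClosure.1 hxA (by simpa using hwx.symm))⟩
  refine ⟨U, W, hU, ?_, (linked.nbhdClosure hd hd₀).thin hU near, covered, fun w hw => ?_, ?_,
    isApproximatingPair_of_cover hU covered (disjoint_left.2 hWA) fun y hy => ?_⟩
  · obtain ⟨x, hx⟩ := hA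
    obtain ⟨u, hu, -⟩ := near x (subset_nbhdClosure hx)
    exact ⟨u, hu⟩
  · obtain ⟨x, hx⟩ := (mem_filter.1 (hW hw)).2.2
    rw [mem_inter, SimpleGraph.mem_neighborFinset] at hx
    exact ⟨x, hx.2, hx.1.symm⟩
  · linarith [card_le_card hUA]
  · by_cases hne : (G.neighborFinset y ∩ almostCovered G ψ U).Nonempty
    · exact hWψ y (mem_filter.2 ⟨mem_univ _, hy, hne⟩)
    · simp [not_nonempty_iff_eq_empty.1 hne]

end Approximation

section LinkedFamily

variable {α : Type*} [Fintype α] [DecidableEq α] (G : SimpleGraph α) [DecidableRel G.Adj]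

/-- Sapozhenko's family `𝒢(a, g)`: the nonempty `2`-linked subsets of `X` whose closure has `a`
elements and whose neighbourhood has `g`. -/
noncomputable def linkedFamily (X : Finset α) (a g : ℕ) : Finset (Finset α) :=
  open scoped Classical in
  {A ∈ X.powerset | A.Nonempty ∧ IsLinked G 2 A ∧ #(nbhdClosure G A) = a ∧ #(nbhd G A) = g}

variable {G} {X Y A Z Z' : Finset α} {a d g t ψ δ M : ℕ}

omit [Fintype α] in
lemma union_inter_eq_left (hXY : Disjoint X Y) (hZ : Z ⊆ X) (hZ' : Z' ⊆ Y) :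
    (Z ∪ Z') ∩ X = Z := by
  rw [union_inter_distrib_right, inter_eq_left.2 hZ,
    disjoint_iff_inter_eq_empty.1 (hXY.symm.mono_left hZ'), union_empty]

lemma mem_linkedFamily : A ∈ linkedFamily G X a g ↔
    A ⊆ X ∧ A.Nonempty ∧ IsLinked G 2 A ∧ #(nbhdClosure G A) = a ∧ #(nbhd G A) = g := by
  simp [linkedFamily]

variable (hXY : G.IsBipartiteWith X Y) (hd : G.IsRegularOfDegree d) (hψ : 0 < ψ) (hψd : 2 * ψ ≤ d)
  (hM : (a + 3 * t) / ψ ≤ M) (hδ : 4 * ψ * t ≤ d * δ)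
include hXY hd hψ hψd hM hδ

/-- Either the outer approximation is small, and determines `A` up to a choice of subset, or
`N(A)` exceeds the inner approximation by little, and this excess then determines the closure
of `A`. -/
lemma exists_certificate_of_mem_linkedFamily (hA : A ∈ linkedFamily G X a (a + t)) :
    ∃ T ∈ linkedSets G 6 M,
      (#(outerApprox G ψ (T ∩ X) (T ∩ Y)) ≤ a + t - δ ∧
        A ⊆ outerApprox G ψ (T ∩ X) (T ∩ Y)) ∨
      ∃ D ∈ linkedSets G 6 (M + 2 * δ),
        #{x | G.neighborFinset x ⊆ innerApprox G ψ (T ∩ X) (T ∩ Y) ∪ D ∩ Y} = a ∧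
        A ⊆ ({x | G.neighborFinset x ⊆ innerApprox G ψ (T ∩ X) (T ∩ Y) ∪ D ∩ Y} : Finset α) := by
  obtain ⟨hAX, hA₀, linked, ha, hg⟩ := mem_linkedFamily.1 hA
  have ht : #(nbhd G A) = #(nbhdClosure G A) + t := by rw [hg, ha]
  obtain ⟨U, W, hU, hU₀, hU₆, covered, hW, hcard, hp⟩ :=
    exists_isApproximatingPair hd (by omega) hψd hA₀ linked ht
  have hUX : U ⊆ X := hU.trans (nbhdClosure_subset_of_isBipartiteWith hXY hd (by omega) hAX)
  have hNY : nbhd G A ⊆ Y := nbhd_subset_of_isBipartiteWith hXY hAX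
  have hWY : W ⊆ Y := fun w hw => by
    obtain ⟨x, hx, hxw⟩ := hW w hw
    exact hXY.mem_of_mem_adj
      (almostCovered_subset_of_isBipartiteWith hd (by omega) hXY hUX hx) hxw
  have disj : Disjoint X Y := disjoint_coe.1 hXY.disjoint
  have decodeX {Z Z' : Finset α} (hZ : Z ⊆ X) (hZ' : Z' ⊆ Y) : (Z ∪ Z') ∩ X = Z :=
    union_inter_eq_left disj hZ hZ'
  have decodeY {Z Z' : Finset α} (hZ : Z ⊆ X) (hZ' : Z' ⊆ Y) : (Z ∪ Z') ∩ Y = Z' := by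
    rw [union_comm, union_inter_eq_left disj.symm hZ' hZ]
  have hUWM : #U + #W ≤ M := by
    refine le_trans ((Nat.le_div_iff_mul_le hψ).2 ?_) hM
    omega
  refine ⟨U ∪ W, union_mem_linkedSets hd (by omega) hU₀ hU₆ hW hUWM, ?_⟩
  rw [decodeX hUX hWY, decodeY hUX hWY]
  obtain small | small := hp.card_le_sub_or_card_sdiff_le hd (by omega) hψd ht hδ
  · exact .inl ⟨hg ▸ small, subset_nbhdClosure.trans hp.nbhdClosure_subset⟩
  · have hD : ∀ z ∈ nbhd G A \ innerApprox G ψ U W, ∃ x ∈ almostCovered G ψ U, G.Adj x z := by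
      intro z hz
      rw [mem_sdiff, ← nbhd_nbhdClosure, mem_nbhd] at hz
      obtain ⟨⟨x, hx, hxz⟩, -⟩ := hz
      exact ⟨x, covered hx, hxz⟩
    refine .inr ⟨U ∪ nbhd G A \ innerApprox G ψ U W,
      union_mem_linkedSets hd (by omega) hU₀ hU₆ hD (by omega), ?_⟩
    rw [decodeY hUX (sdiff_subset.trans hNY), union_sdiff_of_subset hp.subset_nbhd]
    exact ⟨ha, subset_nbhdClosure⟩

lemma card_linkedFamily_le : #(linkedFamily G X a (a + t)) ≤
    #(linkedSets G 6 M) * 2 ^ (a + t - δ) +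
      #(linkedSets G 6 M) * #(linkedSets G 6 (M + 2 * δ)) * 2 ^ a := by
  set S : Finset α → Finset α := fun T => outerApprox G ψ (T ∩ X) (T ∩ Y)
  set C : Finset α × Finset α → Finset α := fun P =>
    {x | G.neighborFinset x ⊆ innerApprox G ψ (P.1 ∩ X) (P.1 ∩ Y) ∪ P.2 ∩ Y}
  have cover : linkedFamily G X a (a + t) ⊆
      ({T ∈ linkedSets G 6 M | #(S T) ≤ a + t - δ}.biUnion fun T => (S T).powerset) ∪
      {P ∈ linkedSets G 6 M ×ˢ linkedSets G 6 (M + 2 * δ) | #(C P) = a}.biUnion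
        fun P => (C P).powerset := by
    intro A hA
    obtain ⟨T, hT, ⟨hS, hAS⟩ | ⟨D, hD, hC, hAC⟩⟩ :=
      exists_certificate_of_mem_linkedFamily hXY hd hψ hψd hM hδ hA
    · exact mem_union_left _ (mem_biUnion.2 ⟨T, mem_filter.2 ⟨hT, hS⟩, mem_powerset.2 hAS⟩)
    · exact mem_union_right _ (mem_biUnion.2
        ⟨(T, D), mem_filter.2 ⟨mk_mem_product hT hD, hC⟩, mem_powerset.2 hAC⟩)
  refine (card_le_card cover).trans ((card_union_le _ _).trans (add_le_add ?_ ?_))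
  · refine (card_biUnion_le_card_mul _ _ (2 ^ (a + t - δ)) fun T hT => ?_).trans
      (Nat.mul_le_mul_right _ (card_filter_le _ _))
    rw [card_powerset]
    exact Nat.pow_le_pow_right two_pos (mem_filter.1 hT).2
  · rw [← card_product]
    refine (card_biUnion_le_card_mul _ _ (2 ^ a) fun P hP => ?_).trans
      (Nat.mul_le_mul_right _ (card_filter_le _ _))
    rw [card_powerset, (mem_filter.1 hP).2]

end LinkedFamily

section Weights

variable {α : Type*} [Fintype α] [DecidableEq α] (G : SimpleGraph α) [DecidableRel G.Adj]

/-- The weight `2 ^ (-|N(A)|)`. When `A` lies in one class of a bipartite graph, this is the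
probability that a uniformly random subset of the other class contains no neighbour of `A`. -/
noncomputable def weight (A : Finset α) : ℝ := (1 / 2) ^ #(nbhd G A)

/-- The non-trivial `2`-linked members of a family of sets of vertices. -/
noncomputable def clusters (𝒵 : Finset (Finset α)) : Finset (Finset α) :=
  open scoped Classical in {A ∈ 𝒵 | IsLinked G 2 A ∧ 2 ≤ #A}

variable {G} {A B X Y : Finset α} {𝒵 : Finset (Finset α)} {d m : ℕ}

lemma weight_nonneg : 0 ≤ weight G A := by unfold weight; positivity

omit [Fintype α] [DecidableEq α] [DecidableRel G.Adj] in
lemma mem_clusters : A ∈ clusters G 𝒵 ↔ A ∈ 𝒵 ∧ IsLinked G 2 A ∧ 2 ≤ #A := by simp [clusters]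

lemma sum_weight_le {g r : ℕ} (h𝒵 : ∀ A ∈ 𝒵, g ≤ #(nbhd G A)) (hr : #𝒵 * 2 ^ r ≤ 2 ^ g) :
    ∑ A ∈ 𝒵, weight G A ≤ (1 / 2) ^ r := by
  have bound : ∀ A ∈ 𝒵, weight G A ≤ (1 / 2) ^ g := fun A hA =>
    pow_le_pow_of_le_one (by norm_num) (by norm_num) (h𝒵 A hA)
  calc ∑ A ∈ 𝒵, weight G A ≤ #𝒵 * (1 / 2) ^ g := by
        rw [← nsmul_eq_mul]
        exact sum_le_card_nsmul _ _ _ bound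
    _ ≤ (1 / 2) ^ r := by
        rw [one_div_pow, one_div_pow, mul_one_div, div_le_div_iff₀ (by positivity) (by positivity),
          one_mul]
        exact_mod_cast hr

section Scattered

lemma card_nbhd_of_pairwiseDisjoint (hd : G.IsRegularOfDegree d)
    (hA : (A : Set α).PairwiseDisjoint fun x => G.neighborFinset x) : #(nbhd G A) = #A * d := by
  rw [nbhd, card_biUnion hA, ← smul_eq_mul, ← sum_const]
  exact sum_congr rfl fun x _ => by rw [G.card_neighborFinset_eq_degree, hd x]

lemma sum_weight_le_of_pairwiseDisjoint (hd : G.IsRegularOfDegree d) (hX : 2 * #X ≤ 2 ^ d)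
    (h𝒵X : 𝒵 ⊆ X.powerset) (hm : ∀ A ∈ 𝒵, m ≤ #A)
    (h𝒵 : ∀ A ∈ 𝒵, (A : Set α).PairwiseDisjoint fun x => G.neighborFinset x) :
    ∑ A ∈ 𝒵, weight G A ≤ 2 * (1 / 2) ^ m := by
  have card_mem : ∀ A ∈ 𝒵, #A ∈ Ico m (#X + 1) := fun A hA =>
    mem_Ico.2 ⟨hm A hA, Nat.lt_succ_of_le (card_le_card (mem_powerset.1 (h𝒵X hA)))⟩
  have layer : ∀ j ∈ Ico m (#X + 1), ∑ A ∈ 𝒵 with #A = j, weight G A ≤ (1 / 2) ^ j := by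
    intro j _
    refine sum_weight_le (g := j * d) ?_ ?_
    · intro A hA
      obtain ⟨hA𝒵, rfl⟩ := mem_filter.1 hA
      exact (card_nbhd_of_pairwiseDisjoint hd (h𝒵 A hA𝒵)).ge
    · have sub : {A ∈ 𝒵 | #A = j} ⊆ X.powersetCard j := fun A hA =>
        mem_powersetCard.2 ⟨mem_powerset.1 (h𝒵X (mem_filter.1 hA).1), (mem_filter.1 hA).2⟩
      calc #{A ∈ 𝒵 | #A = j} * 2 ^ j ≤ #X ^ j * 2 ^ j := by
            gcongr
            refine (card_le_card sub).trans ?_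
            rw [card_powersetCard]
            exact Nat.choose_le_pow _ _
        _ = (2 * #X) ^ j := by rw [← mul_pow, mul_comm]
        _ ≤ (2 ^ d) ^ j := by gcongr
        _ = 2 ^ (j * d) := by rw [← pow_mul, mul_comm]
  calc ∑ A ∈ 𝒵, weight G A
      = ∑ j ∈ Ico m (#X + 1), ∑ A ∈ 𝒵 with #A = j, weight G A :=
        (sum_fiberwise_of_maps_to card_mem _).symm
    _ ≤ ∑ j ∈ Ico m (#X + 1), (1 / 2 : ℝ) ^ j := sum_le_sum layer
    _ ≤ (1 / 2) ^ m / (1 - 1 / 2) := geom_sum_Ico_le_of_lt_one (by norm_num) (by norm_num)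
    _ = 2 * (1 / 2) ^ m := by ring

end Scattered

section Splitting

lemma weight_union (h : Disjoint (nbhd G A) (nbhd G B)) :
    weight G (A ∪ B) = weight G A * weight G B := by
  rw [weight, nbhd_union, card_union_of_disjoint h, pow_add, weight, weight]

omit [Fintype α] [DecidableEq α] [DecidableRel G.Adj] in
lemma reflTransGen_linkStep_of_subset {k : ℕ} {γ : Finset α} {x y : α}
    (hγ : ∀ z ∈ A, z ∈ γ ↔ Relation.ReflTransGen (LinkStep G k A) x z)
    (hy : Relation.ReflTransGen (LinkStep G k A) x y) :
    Relation.ReflTransGen (LinkStep G k γ) x y := by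
  induction hy with
  | refl => exact .refl
  | tail hz step ih =>
    exact ih.tail ⟨(hγ _ step.1).2 hz, (hγ _ step.2.1).2 (hz.tail step), step.2.2⟩

lemma exists_linked_disjoint_nbhd
    (hA : ¬ (A : Set α).PairwiseDisjoint fun x => G.neighborFinset x) :
    ∃ γ ⊆ A, IsLinked G 2 γ ∧ 2 ≤ #γ ∧ Disjoint (nbhd G γ) (nbhd G (A \ γ)) := by
  classical
  obtain ⟨x, hx, y, hy, hxy, hN⟩ : ∃ x ∈ A, ∃ y ∈ A, x ≠ y ∧
      ¬ Disjoint (G.neighborFinset x) (G.neighborFinset y) := by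
    simpa [Set.PairwiseDisjoint, Set.Pairwise] using hA
  obtain ⟨z, hxz, hyz⟩ := not_disjoint_iff.1 hN
  rw [G.mem_neighborFinset] at hxz hyz
  let γ := A.filter (Relation.ReflTransGen (LinkStep G 2 A) x)
  have mem_γ : ∀ z ∈ A, z ∈ γ ↔ Relation.ReflTransGen (LinkStep G 2 A) x z := by
    simp +contextual [γ]
  have hγA : γ ⊆ A := filter_subset _ _
  have path {u} (hu : u ∈ γ) : Relation.ReflTransGen (LinkStep G 2 γ) x u :=
    reflTransGen_linkStep_of_subset mem_γ ((mem_γ u (hγA hu)).1 hu)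
  refine ⟨γ, hγA, fun u hu v hv => ?_, ?_, ?_⟩
  · exact (symm (path hu)).trans (path hv)
  · exact one_lt_card.2 ⟨x, (mem_γ x hx).2 .refl, y,
      (mem_γ y hy).2 (.single ⟨hx, hy, edist_le_two_of_adj_of_adj hxz hyz⟩), hxy⟩
  · refine disjoint_left.2 fun w hw hw' => ?_
    obtain ⟨u, hu, huw⟩ := mem_nbhd.1 hw
    obtain ⟨v, hv, hvw⟩ := mem_nbhd.1 hw'
    obtain ⟨hvA, hvγ⟩ := mem_sdiff.1 hv
    exact hvγ <| (mem_γ v hvA).2 <| ((mem_γ u (hγA hu)).1 hu).tail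
      ⟨hγA hu, hvA, edist_le_two_of_adj_of_adj huw hvw⟩

/-- Splitting off a non-trivial `2`-linked component injects the sets in question into
`clusters G 𝒵 × 𝒵`, and the weight is multiplicative. -/
lemma sum_weight_le_sum_clusters_mul (h𝒵 : IsLowerSet (𝒵 : Set (Finset α)))
    {𝒜 : Finset (Finset α)} (h𝒜 : 𝒜 ⊆ 𝒵)
    (hA : ∀ A ∈ 𝒜, ¬ (A : Set α).PairwiseDisjoint fun x => G.neighborFinset x) :
    ∑ A ∈ 𝒜, weight G A ≤ (∑ A ∈ clusters G 𝒵, weight G A) * ∑ A ∈ 𝒵, weight G A := by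
  choose! γ hγA hγ hγ₂ hdisj using fun A hA' => exists_linked_disjoint_nbhd (hA A hA')
  let split (A : Finset α) : Finset α × Finset α := (γ A, A \ γ A)
  have split_inj : Set.InjOn split 𝒜 := by
    intro A hA B hB hAB
    obtain ⟨h₁, h₂⟩ := Prod.ext_iff.1 hAB
    rw [← union_sdiff_of_subset (hγA A hA), ← union_sdiff_of_subset (hγA B hB)]
    exact congrArg₂ _ h₁ h₂
  have split_mem : 𝒜.image split ⊆ clusters G 𝒵 ×ˢ 𝒵 := image_subset_iff.2 fun A hA =>
    mem_product.2 ⟨mem_clusters.2 ⟨h𝒵 (hγA A hA) (h𝒜 hA), hγ A hA, hγ₂ A hA⟩,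
      h𝒵 sdiff_subset (h𝒜 hA)⟩
  calc ∑ A ∈ 𝒜, weight G A = ∑ A ∈ 𝒜, weight G (split A).1 * weight G (split A).2 :=
        sum_congr rfl fun A hA => by
          rw [← weight_union (hdisj A hA), union_sdiff_of_subset (hγA A hA)]
    _ = ∑ p ∈ 𝒜.image split, weight G p.1 * weight G p.2 := by rw [sum_image split_inj]
    _ ≤ ∑ p ∈ clusters G 𝒵 ×ˢ 𝒵, weight G p.1 * weight G p.2 :=
        sum_le_sum_of_subset_of_nonneg split_mem fun _ _ _ =>
          mul_nonneg weight_nonneg weight_nonneg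
    _ = (∑ A ∈ clusters G 𝒵, weight G A) * ∑ A ∈ 𝒵, weight G A := by
        rw [sum_product, sum_mul_sum]

end Splitting

lemma sum_weight_tail_le (hd : G.IsRegularOfDegree d) (hX : 2 * #X ≤ 2 ^ d)
    (h𝒵X : 𝒵 ⊆ X.powerset) (h𝒵 : IsLowerSet (𝒵 : Set (Finset α)))
    (hσ : ∑ A ∈ clusters G 𝒵, weight G A ≤ 1 / 2) (m : ℕ) :
    ∑ A ∈ 𝒵 with m ≤ #A, weight G A ≤
      2 * (1 / 2) ^ m + 4 * ∑ A ∈ clusters G 𝒵, weight G A := by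
  classical
  set σ := ∑ A ∈ clusters G 𝒵, weight G A
  have tail (m : ℕ) : ∑ A ∈ 𝒵 with m ≤ #A, weight G A ≤
      2 * (1 / 2) ^ m + σ * ∑ A ∈ 𝒵, weight G A := by
    rw [← sum_filter_add_sum_filter_not _
      fun A : Finset α => (A : Set α).PairwiseDisjoint fun x => G.neighborFinset x]
    refine add_le_add (sum_weight_le_of_pairwiseDisjoint hd hX ?_ ?_ ?_)
      (sum_weight_le_sum_clusters_mul h𝒵 ?_ ?_)
    · exact ((filter_subset _ _).trans (filter_subset _ _)).trans h𝒵X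
    · exact fun A hA => (mem_filter.1 (mem_filter.1 hA).1).2
    · exact fun A hA => (mem_filter.1 hA).2
    · exact (filter_subset _ _).trans (filter_subset _ _)
    · exact fun A hA => (mem_filter.1 hA).2
  have σ_nonneg : 0 ≤ σ := sum_nonneg fun _ _ => weight_nonneg
  have total_nonneg : 0 ≤ ∑ A ∈ 𝒵, weight G A := sum_nonneg fun _ _ => weight_nonneg
  have total_le : ∑ A ∈ 𝒵, weight G A ≤ 4 := by
    have := tail 0
    simp only [zero_le, filter_true, pow_zero] at this
    nlinarith
  nlinarith [tail m]

end Weights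

section IndependentSets

variable {α : Type*} [Fintype α] [DecidableEq α] {G : SimpleGraph α} [DecidableRel G.Adj]
  {I X Y : Finset α}

lemma disjoint_nbhd_inter (hI : G.IsIndepSet I) : Disjoint (nbhd G (I ∩ X)) I := by
  refine disjoint_left.2 fun y hy hyI => ?_
  obtain ⟨x, hx, hxy⟩ := mem_nbhd.1 hy
  exact hI (inter_subset_left hx) hyI hxy.ne hxy

/-- An independent set `I` is determined by `A = I ∩ X` together with a subset of `Y \ N(A)`. -/
lemma card_indepSets_le (hXY : G.IsBipartiteWith X Y) (hcover : X ∪ Y = univ)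
    {𝒜 ℐ : Finset (Finset α)} (hℐ : ∀ I ∈ ℐ, G.IsIndepSet I ∧ I ∩ X ∈ 𝒜) (h𝒜 : 𝒜 ⊆ X.powerset) :
    (#ℐ : ℝ) ≤ 2 ^ #Y * ∑ A ∈ 𝒜, weight G A := by
  have fibre : ∀ A ∈ 𝒜, (#{I ∈ ℐ | I ∩ X = A} : ℝ) ≤ 2 ^ #Y * weight G A := by
    intro A hA
    have hN := nbhd_subset_of_isBipartiteWith hXY (mem_powerset.1 (h𝒜 hA))
    have inj : #{I ∈ ℐ | I ∩ X = A} ≤ #(Y \ nbhd G A).powerset := by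
      refine card_le_card_of_injOn (· ∩ Y) ?_ ?_
      · intro I hI
        obtain ⟨hIℐ, rfl⟩ := mem_filter.1 hI
        exact mem_powerset.2 <| subset_sdiff.2 ⟨inter_subset_right,
          ((disjoint_nbhd_inter (hℐ I hIℐ).1).mono_right inter_subset_left).symm⟩
      · intro I hI J hJ hIJ
        have hX : I ∩ X = J ∩ X := (mem_filter.1 hI).2.trans (mem_filter.1 hJ).2.symm
        rw [← inter_univ I, ← inter_univ J, ← hcover, inter_union_distrib_left,
          inter_union_distrib_left, hX]
        exact congrArg _ hIJ
    rw [card_powerset, card_sdiff_of_subset hN] at inj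
    calc (#{I ∈ ℐ | I ∩ X = A} : ℝ) ≤ 2 ^ (#Y - #(nbhd G A)) := by exact_mod_cast inj
      _ = 2 ^ #Y * weight G A := by
        rw [weight, pow_sub₀ _ two_ne_zero (card_le_card hN), one_div, inv_pow]
  rw [card_eq_sum_card_fiberwise fun I hI => (hℐ I hI).2, mul_sum, Nat.cast_sum]
  exact sum_le_sum fibre

variable (G X) in
/-- The subsets of `X` whose closure occupies at most half of `X`. -/
def smallSets : Finset (Finset α) := {A ∈ X.powerset | 2 * #(nbhdClosure G A) ≤ #X}

lemma mem_smallSets {A : Finset α} :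
    A ∈ smallSets G X ↔ A ⊆ X ∧ 2 * #(nbhdClosure G A) ≤ #X := by simp [smallSets]

lemma isLowerSet_smallSets : IsLowerSet (smallSets G X : Set (Finset α)) := by
  intro A B hBA hA
  obtain ⟨hAX, hA⟩ := mem_smallSets.1 hA
  exact mem_smallSets.2 ⟨hBA.trans hAX,
    (Nat.mul_le_mul_left 2 (card_le_card (nbhdClosure_mono hBA))).trans hA⟩

variable {d : ℕ} (hXY : G.IsBipartiteWith X Y) (hd : G.IsRegularOfDegree d) (hd₀ : 0 < d)
include hXY hd hd₀

lemma inter_mem_smallSets_or (hI : G.IsIndepSet I) :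
    I ∩ X ∈ smallSets G X ∨ I ∩ Y ∈ smallSets G Y := by
  have disj : Disjoint (nbhd G (I ∩ X)) (nbhdClosure G (I ∩ Y)) := by
    refine disjoint_left.2 fun y hy hyc => ?_
    obtain ⟨x, hx, hxy⟩ := mem_nbhd.1 hy
    have hxN := mem_nbhdClosure.1 hyc ((G.mem_neighborFinset _ _).2 hxy.symm)
    exact disjoint_left.1 (disjoint_nbhd_inter hI) hxN (inter_subset_left hx)
  have sum_le : #(nbhdClosure G (I ∩ X)) + #(nbhdClosure G (I ∩ Y)) ≤ #Y := by
    refine (Nat.add_le_add_right (card_nbhdClosure_le_card_nbhd hd hd₀ _) _).trans ?_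
    rw [← card_union_of_disjoint disj]
    exact card_le_card <| union_subset (nbhd_subset_of_isBipartiteWith hXY inter_subset_right)
      (nbhdClosure_subset_of_isBipartiteWith hXY.symm hd hd₀ inter_subset_right)
  have hX := two_mul_card_eq_of_isBipartiteWith hXY hd hd₀
  have hY := two_mul_card_eq_of_isBipartiteWith hXY.symm hd hd₀
  simp only [mem_smallSets, inter_subset_right, true_and]
  omega

end IndependentSets

section Cube

variable {n : ℕ}

/-- The neighbour of `x` in direction `i`. -/
def flipCoord (i : Fin n) (x : V n) : V n := x + Pi.single i 1

variable {i j : Fin n} {x y : V n}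

lemma flipCoord_involutive (i : Fin n) : Function.Involutive (flipCoord i) := fun x => by
  ext j
  simp only [flipCoord, Pi.add_apply, add_assoc, CharTwo.add_self_eq_zero, add_zero]

lemma flipCoord_comm (i j : Fin n) (x : V n) :
    flipCoord i (flipCoord j x) = flipCoord j (flipCoord i x) :=
  add_right_comm _ _ _

lemma flipCoord_apply_ne_iff : flipCoord i x j ≠ x j ↔ j = i := by
  simp [flipCoord, Pi.single_apply]

lemma card_image_flipCoord (i : Fin n) (A : Finset (V n)) : #(A.image (flipCoord i)) = #A :=
  card_image_of_injective _ (flipCoord_involutive i).injective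

lemma hammingDist_eq_one_iff : hammingDist x y = 1 ↔ ∃ i, flipCoord i x = y := by
  constructor
  · intro h
    obtain ⟨i, hi⟩ := card_eq_one.1 h
    refine ⟨i, funext fun j => ?_⟩
    have hj : x j ≠ y j ↔ j = i := by simpa using Finset.ext_iff.1 hi j
    have two_values : ∀ a b c : ZMod 2, a ≠ c → b ≠ c → a = b := by decide
    by_cases hji : j = i
    · exact two_values _ _ _ (flipCoord_apply_ne_iff.2 hji) (hj.2 hji).symm
    · exact (not_ne_iff.1 (mt flipCoord_apply_ne_iff.1 hji)).trans (not_ne_iff.1 (mt hj.1 hji))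
  · rintro ⟨i, rfl⟩
    refine card_eq_one.2 ⟨i, ?_⟩
    ext j
    simp [ne_comm (a := x j), flipCoord_apply_ne_iff]

instance (n : ℕ) : DecidableRel (Q n).Adj :=
  inferInstanceAs (DecidableRel (SimpleGraph.fromRel _).Adj)

lemma cube_adj_iff_hammingDist : (Q n).Adj x y ↔ hammingDist x y = 1 := by
  rw [Q, SimpleGraph.fromRel_adj, hammingDist_comm y, or_self, and_iff_right_iff_imp]
  rintro h rfl
  simp at h

lemma cube_adj_iff : (Q n).Adj x y ↔ ∃ i, flipCoord i x = y :=
  cube_adj_iff_hammingDist.trans hammingDist_eq_one_iff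

lemma cube_adj_flipCoord (i : Fin n) (x : V n) : (Q n).Adj x (flipCoord i x) :=
  cube_adj_iff.2 ⟨i, rfl⟩

lemma cube_neighborFinset (x : V n) :
    (Q n).neighborFinset x = univ.image fun i => flipCoord i x := by
  ext; simp [cube_adj_iff]

lemma flipCoord_left_injective (x : V n) : Function.Injective fun i => flipCoord i x :=
  fun i _ hij =>
    flipCoord_apply_ne_iff.1 ((congrFun hij i).symm.trans_ne (flipCoord_apply_ne_iff.2 rfl))

lemma cube_isRegularOfDegree (n : ℕ) : (Q n).IsRegularOfDegree n := fun x => by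
  rw [← SimpleGraph.card_neighborFinset_eq_degree, cube_neighborFinset,
    card_image_of_injective _ (flipCoord_left_injective x), card_univ, Fintype.card_fin]

/-- If `x ≠ y` have a common neighbour then they differ in two coordinates, and every common
neighbour is obtained from `x` by flipping one of these. -/
lemma cube_card_common_neighbors_le (hxy : x ≠ y) :
    #((Q n).neighborFinset x ∩ (Q n).neighborFinset y) ≤ 2 := by
  obtain h | ⟨z, hz⟩ := ((Q n).neighborFinset x ∩ (Q n).neighborFinset y).eq_empty_or_nonempty
  · simp [h]
  simp only [mem_inter, SimpleGraph.mem_neighborFinset, cube_adj_iff_hammingDist] at hz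
  have dist_le : hammingDist x y ≤ 2 := by
    simpa [hz.1, hammingDist_comm z, hz.2] using hammingDist_triangle x z y
  refine le_trans (card_le_card (t := image (fun i => flipCoord i x) {i | x i ≠ y i}) ?_)
    (card_image_le.trans dist_le)
  intro w hw
  simp only [mem_inter, SimpleGraph.mem_neighborFinset, cube_adj_iff] at hw
  obtain ⟨⟨i, rfl⟩, j, hj⟩ := hw
  refine mem_image.2 ⟨i, mem_filter.2 ⟨mem_univ _, fun hi => hxy ?_⟩, rfl⟩
  have hij : i = j := flipCoord_apply_ne_iff.1 <| by
    rw [hj, ← hi]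
    exact flipCoord_apply_ne_iff.2 rfl
  exact (flipCoord_involutive i).injective (by rw [← hj, hij])

lemma natCast_hammingNorm (x : V n) : (hammingNorm x : ZMod 2) = ∑ i, x i := by
  have indicator : ∀ a : ZMod 2, (if a ≠ 0 then 1 else 0) = a := by decide
  rw [hammingNorm, natCast_card_filter]
  exact sum_congr rfl fun i _ => indicator (x i)

lemma mem_evens : x ∈ evens n ↔ ∑ i, x i = 0 := by
  rw [← natCast_hammingNorm, ZMod.natCast_eq_zero_iff_even, evens]; simp

lemma mem_odds : x ∈ odds n ↔ ∑ i, x i = 1 := by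
  rw [← natCast_hammingNorm, ZMod.natCast_eq_one_iff_odd, odds]; simp

lemma sum_flipCoord (i : Fin n) (x : V n) : ∑ j, flipCoord i x j = ∑ j, x j + 1 := by
  simp [flipCoord, sum_add_distrib]

lemma cube_isBipartiteWith (n : ℕ) : (Q n).IsBipartiteWith (evens n : Set (V n)) (odds n) where
  disjoint := by
    refine disjoint_coe.2 (disjoint_left.2 fun x hx hx' => zero_ne_one (α := ZMod 2) ?_)
    rw [← mem_evens.1 hx, mem_odds.1 hx']
  mem_of_adj x y hxy := by
    obtain ⟨i, rfl⟩ := cube_adj_iff.1 hxy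
    have parity : ∀ a : ZMod 2, a = 0 ∧ a + 1 = 1 ∨ a = 1 ∧ a + 1 = 0 := by decide
    simpa only [mem_coe, mem_evens, mem_odds, sum_flipCoord] using parity (∑ j, x j)

lemma evens_union_odds (n : ℕ) : evens n ∪ odds n = univ := by
  ext x; simp [evens, odds, Nat.even_or_odd]

lemma card_cube (n : ℕ) : Fintype.card (V n) = 2 ^ n := by simp [V, ZMod.card]

end Cube

section Talagrand

variable {n : ℕ}

/-- The number of edges of the cube leading from the vertex `x` out of the set `S`. -/
def exitDegree (S : Finset (V n)) (x : V n) : ℕ := #{i | flipCoord i x ∉ S}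

/-- Talagrand's boundary functional `∑_{x ∈ S} √h_S(x)`, where `h_S(x)` is the number of edges
from `x` to the complement of `S`. -/
noncomputable def sqrtBoundary (S : Finset (V n)) : ℝ := ∑ x ∈ S, √(exitDegree S x)

/-- The section of `S` over the value `c` of the zeroth coordinate. -/
def slice (c : ZMod 2) (S : Finset (V (n + 1))) : Finset (V n) :=
  {x | (Fin.cons c x : V (n + 1)) ∈ S}

/-- The part of `sqrtBoundary` that comes from one slice `S` of a set whose other slice is `T`. -/
noncomputable def sliceBoundary (S T : Finset (V n)) : ℝ :=
  ∑ x ∈ S, √(exitDegree S x + if x ∈ T then 0 else 1)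

lemma mem_slice {c : ZMod 2} {S : Finset (V (n + 1))} {x : V n} :
    x ∈ slice c S ↔ (Fin.cons c x : V (n + 1)) ∈ S := by simp [slice]

lemma sum_eq_sum_slice_add (S : Finset (V (n + 1))) (f : V (n + 1) → ℝ) :
    ∑ x ∈ S, f x = ∑ x ∈ slice 0 S, f (Fin.cons 0 x : V (n + 1)) +
      ∑ x ∈ slice 1 S, f (Fin.cons 1 x : V (n + 1)) := by
  have split := ((Fin.consEquiv fun _ : Fin (n + 1) => ZMod 2).sum_comp
    fun x => if x ∈ S then f x else 0).symm
  rw [Fintype.sum_prod_type] at split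
  have two := Fin.sum_univ_two
    fun c : ZMod 2 => ∑ x : V n, if (Fin.cons c x : V (n + 1)) ∈ S then f (Fin.cons c x) else 0
  simp only [slice, sum_filter]
  refine Eq.trans ?_ (split.trans two)
  simp only [sum_ite_mem, univ_inter]

lemma card_eq_card_slice_add (S : Finset (V (n + 1))) :
    (#S : ℝ) = #(slice 0 S) + #(slice 1 S) := by
  simpa using sum_eq_sum_slice_add S fun _ => 1

lemma flipCoord_zero_cons (c : ZMod 2) (x : V n) :
    flipCoord 0 (Fin.cons c x : V (n + 1)) = (Fin.cons (c + 1) x : V (n + 1)) := by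
  ext j
  cases j using Fin.cases <;> simp [flipCoord]

lemma flipCoord_succ_cons (c : ZMod 2) (x : V n) (i : Fin n) :
    flipCoord i.succ (Fin.cons c x : V (n + 1)) = (Fin.cons c (flipCoord i x) : V (n + 1)) := by
  ext j
  cases j using Fin.cases <;> simp [flipCoord, Pi.single_apply]

lemma exitDegree_cons (S : Finset (V (n + 1))) (c : ZMod 2) (x : V n) :
    exitDegree S (Fin.cons c x : V (n + 1)) =
      exitDegree (slice c S) x + if x ∈ slice (c + 1) S then 0 else 1 := by
  simp only [exitDegree, card_filter, Fin.sum_univ_succ, flipCoord_zero_cons, flipCoord_succ_cons,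
    mem_slice, ite_not, add_comm]

lemma sqrtBoundary_eq_sliceBoundary_add (S : Finset (V (n + 1))) :
    sqrtBoundary S =
      sliceBoundary (slice 0 S) (slice 1 S) + sliceBoundary (slice 1 S) (slice 0 S) := by
  rw [sqrtBoundary, sum_eq_sum_slice_add]
  simp [exitDegree_cons, sliceBoundary, CharTwo.add_self_eq_zero]

lemma sqrtBoundary_nonneg (S : Finset (V n)) : 0 ≤ sqrtBoundary S :=
  sum_nonneg fun _ _ => Real.sqrt_nonneg _

lemma sqrt_sq_sum_add_sq_sum_le {ι : Type*} (s : Finset ι) (a b : ι → ℝ) :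
    √((∑ i ∈ s, a i) ^ 2 + (∑ i ∈ s, b i) ^ 2) ≤ ∑ i ∈ s, √(a i ^ 2 + b i ^ 2) := by
  simpa [Complex.norm_eq_sqrt_sq_add_sq] using norm_sum_le s fun i => (⟨a i, b i⟩ : ℂ)

lemma sqrt_sqrtBoundary_sq_add_le_sliceBoundary (S T : Finset (V n)) :
    √(sqrtBoundary S ^ 2 + (#(S \ T) : ℝ) ^ 2) ≤ sliceBoundary S T := by
  have card_eq : (#(S \ T) : ℝ) = ∑ x ∈ S, if x ∈ T then 0 else 1 := by
    rw [← filter_notMem_eq_sdiff, natCast_card_filter]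
    simp only [ite_not]
  rw [card_eq, sqrtBoundary]
  refine (sqrt_sq_sum_add_sq_sum_le _ _ _).trans_eq (sum_congr rfl fun x _ => ?_)
  rw [Real.sq_sqrt (Nat.cast_nonneg _), ite_pow, zero_pow two_ne_zero, one_pow]

lemma sqrtBoundary_le_sliceBoundary (S T : Finset (V n)) : sqrtBoundary S ≤ sliceBoundary S T :=
  (Real.le_sqrt_of_sq_le (le_add_of_nonneg_right (sq_nonneg _))).trans
    (sqrt_sqrtBoundary_sq_add_le_sliceBoundary S T)

/-- The inductive step of Talagrand's inequality for slices of sizes `q ≤ p`; it rests on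
`(p + q) * (2 * M - (p + q)) = 2 * p * (M - p) + 2 * q * (M - q) + (p - q) ^ 2`. -/
lemma two_point_inequality {M p q u v : ℝ} (hM : 0 < M) (hq : 0 ≤ q) (hqp : q ≤ p) (hpM : p ≤ M)
    (hu : p * (M - p) ≤ M * u) (hv : q * (M - q) ≤ M * v) :
    (p + q) * (2 * M - (p + q)) ≤ 2 * M * (√(u ^ 2 + (p - q) ^ 2) + v) := by
  have variance_nonneg : 0 ≤ p * (M - p) := mul_nonneg (hq.trans hqp) (sub_nonneg.2 hpM)
  have variance_le : p * (M - p) ≤ M ^ 2 / 4 := by linarith [sq_nonneg (p - M / 2)]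
  have gap_le : (p - q) ^ 2 ≤ M ^ 2 := by gcongr; linarith
  have root : (p * (M - p) + (p - q) ^ 2 / 2) / M ≤ √(u ^ 2 + (p - q) ^ 2) := by
    refine Real.le_sqrt_of_sq_le ?_
    rw [div_pow, div_le_iff₀ (by positivity)]
    have : (p * (M - p)) ^ 2 ≤ (M * u) ^ 2 := by gcongr
    have := mul_le_mul_of_nonneg_right variance_le (sq_nonneg (p - q))
    have := mul_le_mul_of_nonneg_right gap_le (sq_nonneg (p - q))
    have := mul_nonneg (sq_nonneg M) (sq_nonneg (p - q))
    linarith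
  rw [div_le_iff₀ hM] at root
  linarith

lemma talagrand_step {S T : Finset (V n)} (hTS : #T ≤ #S)
    (hS : (#S : ℝ) * (2 ^ n - #S) ≤ 2 ^ n * sqrtBoundary S)
    (hT : (#T : ℝ) * (2 ^ n - #T) ≤ 2 ^ n * sqrtBoundary T) :
    ((#S : ℝ) + #T) * (2 * 2 ^ n - (#S + #T)) ≤
      2 * 2 ^ n * (sliceBoundary S T + sliceBoundary T S) := by
  have card_le : (#S : ℝ) ≤ 2 ^ n := by exact_mod_cast card_cube n ▸ card_le_univ S
  have gap : (#S : ℝ) - #T ≤ #(S \ T) := by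
    rw [sub_le_iff_le_add]
    exact_mod_cast tsub_le_iff_right.1 (le_card_sdiff T S)
  have gap_nonneg : (0 : ℝ) ≤ #S - #T := sub_nonneg.2 (by exact_mod_cast hTS)
  calc ((#S : ℝ) + #T) * (2 * 2 ^ n - (#S + #T))
      ≤ 2 * 2 ^ n * (√(sqrtBoundary S ^ 2 + (#S - #T) ^ 2) + sqrtBoundary T) :=
        two_point_inequality (by positivity) (by positivity) (by exact_mod_cast hTS) card_le hS hT
    _ ≤ 2 * 2 ^ n * (√(sqrtBoundary S ^ 2 + (#(S \ T) : ℝ) ^ 2) + sqrtBoundary T) := by gcongr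
    _ ≤ 2 * 2 ^ n * (sliceBoundary S T + sliceBoundary T S) := by
        gcongr
        exacts [sqrt_sqrtBoundary_sq_add_le_sliceBoundary S T, sqrtBoundary_le_sliceBoundary T S]

theorem card_mul_sub_card_le_sqrtBoundary (S : Finset (V n)) :
    (#S : ℝ) * (2 ^ n - #S) ≤ 2 ^ n * sqrtBoundary S := by
  induction n with
  | zero =>
    have card_le : #S ≤ 1 := by simpa using card_le_univ S
    have : (#S : ℝ) * (2 ^ 0 - #S) = 0 := by interval_cases #S <;> simp
    rw [this, pow_zero, one_mul]
    exact sqrtBoundary_nonneg S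
  | succ n ih =>
    rw [card_eq_card_slice_add, sqrtBoundary_eq_sliceBoundary_add, pow_succ']
    obtain h | h := le_total #(slice 1 S) #(slice 0 S)
    · exact talagrand_step h (ih _) (ih _)
    · simpa only [add_comm] using talagrand_step h (ih _) (ih _)

end Talagrand

section Isoperimetry

variable {n : ℕ} (o : Fin n) (C : Finset (V n))

/-- A vertex outside `C + {0, e_o}` with a neighbour inside belongs to `N(C) \ (C + e_o)` or to
its translate by `e_o`. -/
lemma innerBoundary_compl_subset :
    ({x ∈ (C ∪ C.image (flipCoord o))ᶜ | exitDegree (C ∪ C.image (flipCoord o))ᶜ x ≠ 0} :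
      Finset (V n)) ⊆ (nbhd (Q n) C \ C.image (flipCoord o)) ∪
        (nbhd (Q n) C \ C.image (flipCoord o)).image (flipCoord o) := by
  have mem_image_flip {x : V n} {A : Finset (V n)} :
      x ∈ A.image (flipCoord o) ↔ flipCoord o x ∈ A := by
    rw [mem_image]
    exact ⟨fun ⟨y, hy, h⟩ => by rwa [← h, flipCoord_involutive o], fun h =>
      ⟨_, h, flipCoord_involutive o x⟩⟩
  intro x hx
  obtain ⟨hxC, hx⟩ := mem_filter.1 hx
  obtain ⟨i, hi⟩ := card_pos.1 (Nat.pos_of_ne_zero hx)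
  simp only [mem_filter, mem_compl, mem_union, mem_image_flip, not_or, not_and_or, not_not,
    mem_univ, true_and,
    mem_sdiff, flipCoord_involutive o x] at hi hxC ⊢
  obtain hi | hi := hi
  · exact .inl ⟨mem_nbhd.2 ⟨_, hi, (cube_adj_flipCoord i x).symm⟩, hxC.2⟩
  · rw [flipCoord_comm] at hi
    exact .inr ⟨mem_nbhd.2 ⟨_, hi, (cube_adj_flipCoord i _).symm⟩, hxC.1⟩

lemma sqrtBoundary_le_card_mul_sqrt (S : Finset (V n)) :
    sqrtBoundary S ≤ #{x ∈ S | exitDegree S x ≠ 0} * √n := by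
  rw [sqrtBoundary, ← sum_filter_of_ne (p := fun x => exitDegree S x ≠ 0) (by simp),
    ← nsmul_eq_mul]
  refine sum_le_card_nsmul _ _ _ fun x _ => Real.sqrt_le_sqrt ?_
  exact_mod_cast (card_le_univ _).trans_eq (Fintype.card_fin n)

/-- Talagrand's inequality for the complement of `C + {0, e_o}`. Passing from `C` to this set
yields an inequality that measures `N(C)` relative to `C`, even when `C` is an independent set. -/
theorem card_le_card_nbhd_sub_mul_sqrt (hn : 0 < n) (hC : 4 * #C ≤ 2 ^ n) :
    (#C : ℝ) ≤ 4 * (#(nbhd (Q n) C) - #C) * √n := by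
  set C' := C.image (flipCoord ⟨0, hn⟩)
  have C'_sub : C' ⊆ nbhd (Q n) C := image_subset_iff.2 fun x hx =>
    mem_nbhd.2 ⟨x, hx, cube_adj_flipCoord _ x⟩
  have card_C' : #C' = #C := card_image_flipCoord _ C
  set D := nbhd (Q n) C \ C'
  have card_D : (#D : ℝ) = #(nbhd (Q n) C) - #C := by
    rw [card_sdiff_of_subset C'_sub, Nat.cast_sub (card_le_card C'_sub), card_C']
  have boundary_le : sqrtBoundary (C ∪ C')ᶜ ≤ 2 * #D * √n := by
    refine (sqrtBoundary_le_card_mul_sqrt _).trans ?_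
    gcongr
    have := (card_le_card (innerBoundary_compl_subset ⟨0, hn⟩ C)).trans (card_union_le _ _)
    rw [card_image_flipCoord, ← two_mul] at this
    exact_mod_cast this
  have talagrand := card_mul_sub_card_le_sqrtBoundary (C ∪ C')ᶜ
  have card_compl : (#(C ∪ C')ᶜ : ℝ) = 2 ^ n - #(C ∪ C') := by
    rw [Finset.card_compl, card_cube, Nat.cast_sub (card_cube n ▸ card_le_univ _), Nat.cast_pow,
      Nat.cast_ofNat]
  have hC : 4 * (#C : ℝ) ≤ 2 ^ n := by exact_mod_cast hC
  have le_card : (#C : ℝ) ≤ #(C ∪ C') := by exact_mod_cast card_le_card subset_union_left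
  have card_le : (#(C ∪ C') : ℝ) ≤ 2 * #C := by
    have := card_union_le C C'
    rw [card_C', ← two_mul] at this
    exact_mod_cast this
  have lower : 2 ^ n * ((#C : ℝ) / 2) ≤ 2 ^ n * (2 * #D * √n) := by
    calc 2 ^ n * ((#C : ℝ) / 2) = 2 ^ n / 2 * #C := by ring
      _ ≤ (2 ^ n - #(C ∪ C')) * #(C ∪ C') :=
        mul_le_mul (by linarith) le_card (by positivity) (by linarith)
      _ ≤ 2 ^ n * sqrtBoundary (C ∪ C')ᶜ := by
        rwa [card_compl, sub_sub_cancel] at talagrand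
      _ ≤ 2 ^ n * (2 * #D * √n) := by gcongr
  rw [← card_D]
  linarith [le_of_mul_le_mul_left lower (by positivity)]

end Isoperimetry

section LargeClusters

lemma le_div_mul_two_mul {a b : ℕ} (hb : 0 < b) (h : b ≤ a) : a ≤ a / b * (2 * b) := by
  have := Nat.lt_div_mul_add (a := a) hb
  have := Nat.mul_le_mul_right b ((Nat.one_le_div_iff hb).2 h)
  linarith

variable {n L : ℕ}

lemma card_cube_linkedSets_le (hL : n + 1 ≤ 2 ^ L) (k m : ℕ) :
    #(linkedSets (Q n) k m) ≤ 2 ^ (n + 2 * k * L * m) := by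
  refine (card_linkedSets_le (fun x => (cube_isRegularOfDegree n x).le) k m).trans ?_
  calc Fintype.card (V n) * ((n + 1) ^ k) ^ (2 * m)
      ≤ 2 ^ n * ((2 ^ L) ^ k) ^ (2 * m) := by rw [card_cube]; gcongr
    _ = 2 ^ (n + 2 * k * L * m) := by rw [← pow_mul, ← pow_mul, ← pow_add]; ring_nf

section Parameters

variable {a t : ℕ} (hL₁ : 1 ≤ L) (hLn : (10 : ℝ) ^ 8 * L ^ 3 ≤ √n) (hat : (a + t : ℝ) ≤ 5 * √n * t)
  (hg : n ^ 2 < 48 * L * (a + t))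
include hL₁ hLn

lemma mul_pow_le_sqrt {i : ℕ} (hi : i ≤ 3) : (10 : ℝ) ^ 8 * L ^ i ≤ √n :=
  le_trans (by gcongr; exact_mod_cast hL₁) hLn

lemma mul_le_dim : 768 * L ≤ n := by
  have hL₁' : (1 : ℝ) ≤ L := by exact_mod_cast hL₁
  have hs := mul_pow_le_sqrt hL₁ hLn (i := 1) (by norm_num)
  have : (768 * L : ℝ) ≤ n := by nlinarith [Real.mul_self_sqrt (n.cast_nonneg (α := ℝ))]
  exact_mod_cast this

include hat hg

lemma sqrt_pow_three_le : √n ^ 3 ≤ 240 * L * t := by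
  have hs : 0 < √(n : ℝ) := lt_of_lt_of_le (by positivity) hLn
  refine le_of_mul_le_mul_right ?_ hs
  calc √n ^ 3 * √n = (√n ^ 2) ^ 2 := by ring
    _ = (n : ℝ) ^ 2 := by rw [Real.sq_sqrt n.cast_nonneg]
    _ ≤ 48 * L * (a + t) := by exact_mod_cast hg.le
    _ ≤ 48 * L * (5 * √n * t) := by gcongr
    _ = 240 * L * t * √n := by ring

lemma mul_dim_le_gap : 10000 * (L * n) ≤ t := by
  have hL₀ : (0 : ℝ) < L := by exact_mod_cast hL₁
  suffices (10000 * (L * n) : ℝ) ≤ t by exact_mod_cast this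
  refine le_of_mul_le_mul_right ?_ (mul_pos (by norm_num : (0 : ℝ) < 240) hL₀)
  calc (10000 * (L * n) : ℝ) * (240 * L) ≤ 10 ^ 8 * L ^ 2 * n := by
        linarith [show (0 : ℝ) ≤ L ^ 2 * n by positivity]
    _ ≤ √n * n := by gcongr; exact mul_pow_le_sqrt hL₁ hLn (by norm_num)
    _ = √n ^ 3 := by nth_rw 2 [← Real.sq_sqrt n.cast_nonneg]; ring
    _ ≤ 240 * L * t := sqrt_pow_three_le hL₁ hLn hat hg
    _ = t * (240 * L) := by ring

omit hg in
lemma mul_container_size_le_gap : 8680 * (L ^ 2 * ((a + 3 * t) / (n / (384 * L)))) ≤ t := by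
  set ψ := n / (384 * L)
  set M := (a + 3 * t) / ψ
  have hn : (n : ℝ) ≤ ψ * (768 * L) := by
    have := le_div_mul_two_mul (a := n) (b := 384 * L) (by lia)
      (by linarith [mul_le_dim hL₁ hLn])
    rw [← mul_assoc 2] at this
    exact_mod_cast this
  have hMψ : (M : ℝ) * ψ ≤ 15 * √n * t := by
    have : (M * ψ : ℝ) ≤ a + 3 * t := by exact_mod_cast Nat.div_mul_le_self _ _
    linarith [(a.cast_nonneg : (0 : ℝ) ≤ a)]
  have hs : 0 < √(n : ℝ) := lt_of_lt_of_le (by positivity) hLn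
  have hMs : M * √n ≤ 11520 * L * t := by
    refine le_of_mul_le_mul_right ?_ hs
    calc M * √n * √n = M * n := by rw [mul_assoc, Real.mul_self_sqrt n.cast_nonneg]
      _ ≤ M * (ψ * (768 * L)) := by gcongr
      _ = M * ψ * (768 * L) := by ring
      _ ≤ 15 * √n * t * (768 * L) := by gcongr
      _ = 11520 * L * t * √n := by ring
  suffices (8680 * (L ^ 2 * M) : ℝ) ≤ t by exact_mod_cast this
  refine le_of_mul_le_mul_right ?_ hs
  calc (8680 * (L ^ 2 * M) : ℝ) * √n = 8680 * L ^ 2 * (M * √n) := by ring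
    _ ≤ 8680 * L ^ 2 * (11520 * L * t) := by gcongr
    _ ≤ t * (10 ^ 8 * L ^ 3) := by linarith [show (0 : ℝ) ≤ L ^ 3 * t by positivity]
    _ ≤ t * √n := by gcongr

lemma exists_container_parameters : ∃ ψ δ M, 0 < ψ ∧ 2 * ψ ≤ n ∧ (a + 3 * t) / ψ ≤ M ∧
    4 * ψ * t ≤ n * δ ∧ δ ≤ t ∧ 7 * n + 12 * L * M ≤ δ ∧ 8 * n + 24 * L * M + 24 * L * δ ≤ t := by
  have hn := mul_le_dim hL₁ hLn
  have ht := mul_dim_le_gap hL₁ hLn hat hg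
  have hM := mul_container_size_le_gap hL₁ hLn hat
  set ψ := n / (384 * L)
  set M := (a + 3 * t) / ψ
  set δ := t / (48 * L)
  have hψn : ψ * (384 * L) ≤ n := Nat.div_mul_le_self _ _
  have hδt : δ * (48 * L) ≤ t := Nat.div_mul_le_self _ _
  have htδ : t ≤ δ * (2 * (48 * L)) := le_div_mul_two_mul (by lia) (by nlinarith)
  have hLM : L * M ≤ L ^ 2 * M := by gcongr; exact Nat.le_self_pow (by norm_num) L
  have hLn' : n ≤ L * n := Nat.le_mul_of_pos_left n hL₁
  refine ⟨ψ, δ, M, Nat.div_pos (by linarith) (by lia), by nlinarith, le_rfl, ?_,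
    Nat.div_le_self _ _, ?_, by linarith⟩
  · calc 4 * ψ * t ≤ 4 * ψ * (δ * (2 * (48 * L))) := by gcongr
      _ = ψ * (384 * L) * δ := by ring
      _ ≤ n * δ := by gcongr
  · refine Nat.le_of_mul_le_mul_right ?_ (by lia : 0 < 96 * L)
    calc (7 * n + 12 * L * M) * (96 * L) = 672 * (L * n) + 1152 * (L ^ 2 * M) := by ring
      _ ≤ δ * (96 * L) := by linarith

end Parameters

variable {X Y : Finset (V n)} {a g : ℕ} (hL₁ : 1 ≤ L) (hL : n + 1 ≤ 2 ^ L)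
  (hLn : (10 : ℝ) ^ 8 * L ^ 3 ≤ √n) (hXY : (Q n).IsBipartiteWith (X : Set (V n)) Y)
include hL₁ hL hLn hXY

lemma card_linkedFamily_mul_le {t : ℕ} (hat : (a + t : ℝ) ≤ 5 * √n * t)
    (hg : n ^ 2 < 48 * L * (a + t)) :
    #(linkedFamily (Q n) X a (a + t)) * 2 ^ (5 * n) ≤ 2 ^ (a + t) := by
  have hn : 0 < n := by linarith [mul_le_dim hL₁ hLn]
  obtain ⟨ψ, δ, M, hψ, hψn, hM, hδ, hδt, hδM, htM⟩ := exists_container_parameters hL₁ hLn hat hg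
  have card_containers (m : ℕ) : #(linkedSets (Q n) 6 m) ≤ 2 ^ (n + 12 * L * m) := by
    simpa using card_cube_linkedSets_le hL 6 m
  calc #(linkedFamily (Q n) X a (a + t)) * 2 ^ (5 * n)
      ≤ (2 ^ (n + 12 * L * M) * 2 ^ (a + t - δ)
          + 2 ^ (n + 12 * L * M) * 2 ^ (n + 12 * L * (M + 2 * δ)) * 2 ^ a) * 2 ^ (5 * n) := by
        gcongr
        refine (card_linkedFamily_le hXY (cube_isRegularOfDegree n) hψ hψn hM hδ).trans ?_
        gcongr <;> exact card_containers _
    _ = 2 ^ (n + 12 * L * M + (a + t - δ) + 5 * n)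
          + 2 ^ (n + 12 * L * M + (n + 12 * L * (M + 2 * δ)) + a + 5 * n) := by
        rw [add_mul, ← pow_add, ← pow_add, ← pow_add, ← pow_add, ← pow_add]
    _ ≤ 2 ^ (a + t - 1) + 2 ^ (a + t - 1) := by
        gcongr
        · norm_num
        · lia
        · norm_num
        · rw [mul_add]; lia
    _ = 2 ^ (a + t) := by rw [← two_mul, ← pow_succ', Nat.sub_add_cancel (by lia)]

lemma card_linkedFamily_mul_le_two_pow (ha : 2 * a ≤ #X) (hg : n ^ 2 < 48 * L * g) :
    #(linkedFamily (Q n) X a g) * 2 ^ (5 * n) ≤ 2 ^ g := by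
  obtain h | ⟨A, hA⟩ := (linkedFamily (Q n) X a g).eq_empty_or_nonempty
  · simp [h]
  have hn : 0 < n := by linarith [mul_le_dim hL₁ hLn]
  have hd := cube_isRegularOfDegree n
  obtain ⟨-, -, -, rfl, rfl⟩ := mem_linkedFamily.1 hA
  have hX := two_mul_card_eq_of_isBipartiteWith hXY hd hn
  rw [card_cube] at hX
  have hiso := card_le_card_nbhd_sub_mul_sqrt (nbhdClosure (Q n) A) hn (by linarith)
  obtain ⟨t, ht⟩ := Nat.exists_eq_add_of_le (card_nbhdClosure_le_card_nbhd hd hn A)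
  rw [nbhd_nbhdClosure, ht] at hiso
  rw [ht] at hg ⊢
  refine card_linkedFamily_mul_le hL₁ hL hLn hXY ?_ hg
  have hs : 1 ≤ √(n : ℝ) := Real.one_le_sqrt.2 (by exact_mod_cast hn)
  push_cast at hiso
  nlinarith [(t.cast_nonneg : (0 : ℝ) ≤ t)]

end LargeClusters

section ClusterSum

variable {n L : ℕ} {X Y A : Finset (V n)}

lemma sum_le_card_mul_of_fiberwise_le {ι κ : Type*} [DecidableEq κ] {s : Finset ι} {t : Finset κ}
    {f : ι → ℝ} {φ : ι → κ} {c : ℝ} (hφ : ∀ i ∈ s, φ i ∈ t)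
    (hc : ∀ j ∈ t, ∑ i ∈ s with φ i = j, f i ≤ c) : ∑ i ∈ s, f i ≤ #t * c := by
  rw [← sum_fiberwise_of_maps_to hφ, ← nsmul_eq_mul]
  exact sum_le_card_nsmul _ _ _ hc

lemma mul_half_pow_le {N p q : ℕ} (hN : N ≤ 2 ^ p) :
    (N : ℝ) * (1 / 2) ^ (p + q) ≤ (1 / 2) ^ q := by
  calc (N : ℝ) * (1 / 2) ^ (p + q) ≤ 2 ^ p * (1 / 2) ^ (p + q) := by gcongr; exact_mod_cast hN
    _ = (1 / 2) ^ q := by rw [pow_add, ← mul_assoc, ← mul_pow]; norm_num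

lemma add_le_card_nbhd_of_small (hL₁ : 1 ≤ L) (hLn : 26 * L ≤ n) (hA : 2 ≤ #A)
    (hsmall : 48 * L * #A ≤ n ^ 2) : n + 4 * L * #A + 3 * L ≤ #(nbhd (Q n) A) := by
  have h := sq_mul_card_le_card_nbhd_mul (cube_isRegularOfDegree n)
    (fun _ _ hxy => cube_card_common_neighbors_le hxy) A
  obtain ⟨i, hi⟩ : ∃ i, #A = i + 2 := Nat.exists_eq_add_of_le' hA
  rw [hi] at h hsmall ⊢
  rw [show i + 2 - 1 = i + 1 by lia] at h
  refine Nat.le_of_mul_le_mul_right (le_trans ?_ h) (by lia : 0 < n + 2 * (i + 1))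
  have linear : 4 * L * (i + 2) + 3 * L ≤ 11 * L * (i + 1) := by nlinarith
  have quadratic : 2 * n + 11 * L * n + 22 * L * (i + 1) ≤ n ^ 2 := by nlinarith
  calc (n + 4 * L * (i + 2) + 3 * L) * (n + 2 * (i + 1))
      ≤ (n + 11 * L * (i + 1)) * (n + 2 * (i + 1)) :=
        Nat.mul_le_mul_right _ (by linarith)
    _ = n ^ 2 + (2 * n + 11 * L * n + 22 * L * (i + 1)) * (i + 1) := by ring
    _ ≤ n ^ 2 + n ^ 2 * (i + 1) := by gcongr
    _ = n ^ 2 * (i + 2) := by ring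

lemma sum_weight_small_clusters_le (hL₁ : 1 ≤ L) (hL : n + 1 ≤ 2 ^ L) (hLn : 26 * L ≤ n)
    (𝒵 : Finset (Finset (V n))) :
    ∑ A ∈ clusters (Q n) 𝒵 with 48 * L * #A ≤ n ^ 2, weight (Q n) A ≤ (1 / 2) ^ L := by
  have card_lt : ∀ A ∈ {A ∈ clusters (Q n) 𝒵 | 48 * L * #A ≤ n ^ 2}, #A ∈ range (n ^ 2 + 1) := by
    intro A hA
    have := (mem_filter.1 hA).2
    exact mem_range.2 (by nlinarith)
  refine (sum_le_card_mul_of_fiberwise_le (c := (1 / 2) ^ (2 * L + L)) card_lt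
    fun j _ => ?_).trans (mul_half_pow_le ?_)
  · refine sum_weight_le (g := n + 4 * L * j + 3 * L) (fun A hA => ?_) ?_
    · simp only [mem_filter, mem_clusters] at hA
      obtain ⟨⟨⟨-, -, hA⟩, hsmall⟩, rfl⟩ := hA
      exact add_le_card_nbhd_of_small hL₁ hLn hA hsmall
    · have sub : {A ∈ {A ∈ clusters (Q n) 𝒵 | 48 * L * #A ≤ n ^ 2} | #A = j}
          ⊆ linkedSets (Q n) 2 j := fun A hA => by
        simp only [mem_filter, mem_clusters] at hA
        exact mem_linkedSets.2 ⟨card_pos.1 (by lia), hA.1.1.2.1, hA.2.le⟩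
      rw [← Nat.succ_mul, pow_add]
      gcongr
      exact (card_le_card sub).trans (card_cube_linkedSets_le hL 2 j)
  · calc #(range (n ^ 2 + 1)) ≤ (n + 1) ^ 2 := by rw [card_range]; nlinarith
      _ ≤ (2 ^ L) ^ 2 := by gcongr
      _ = 2 ^ (2 * L) := by rw [← pow_mul, mul_comm]

variable (hL₁ : 1 ≤ L) (hL : n + 1 ≤ 2 ^ L)
  (hLn : (10 : ℝ) ^ 8 * L ^ 3 ≤ √n) (hXY : (Q n).IsBipartiteWith (X : Set (V n)) Y)
include hL₁ hL hLn hXY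

lemma sum_weight_large_clusters_le :
    ∑ A ∈ clusters (Q n) (smallSets (Q n) X) with ¬ 48 * L * #A ≤ n ^ 2, weight (Q n) A
      ≤ (1 / 2) ^ n := by
  have hn : 0 < n := by linarith [mul_le_dim hL₁ hLn]
  have card_mem_range (A : Finset (V n)) : #A ∈ range (2 ^ n + 1) :=
    mem_range.2 (Nat.lt_succ_of_le ((card_le_univ A).trans (card_cube n).le))
  refine (sum_le_card_mul_of_fiberwise_le (c := (1 / 2) ^ (4 * n + n))
    (φ := fun A => (#(nbhdClosure (Q n) A), #(nbhd (Q n) A)))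
    (fun A _ => mem_product.2 ⟨card_mem_range _, card_mem_range _⟩)
    fun ⟨a, g⟩ _ => ?_).trans (mul_half_pow_le ?_)
  · set ℱ := {A ∈ {A ∈ clusters (Q n) (smallSets (Q n) X) | ¬ 48 * L * #A ≤ n ^ 2} |
      (#(nbhdClosure (Q n) A), #(nbhd (Q n) A)) = (a, g)}
    have mem_ℱ {A : Finset (V n)} (hA : A ∈ ℱ) : A ∈ linkedFamily (Q n) X a g ∧
        2 * a ≤ #X ∧ n ^ 2 < 48 * L * g := by
      simp only [ℱ, mem_filter, mem_clusters, mem_smallSets, Prod.mk.injEq, not_le] at hA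
      obtain ⟨⟨⟨⟨hAX, hclosure⟩, hlinked, hcard⟩, hlarge⟩, rfl, rfl⟩ := hA
      refine ⟨mem_linkedFamily.2 ⟨hAX, card_pos.1 (by lia), hlinked, rfl, rfl⟩, hclosure, ?_⟩
      exact hlarge.trans_le
        (Nat.mul_le_mul_left _ (card_le_card_nbhd (cube_isRegularOfDegree n) hn A))
    refine sum_weight_le (fun A hA => (mem_linkedFamily.1 (mem_ℱ hA).1).2.2.2.2.ge) ?_
    obtain h | ⟨A, hA⟩ := ℱ.eq_empty_or_nonempty
    · simp [h]
    obtain ⟨-, ha, hg⟩ := mem_ℱ hA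
    rw [← Nat.succ_mul]
    exact (Nat.mul_le_mul_right _ (card_le_card fun A hA => (mem_ℱ hA).1)).trans
      (card_linkedFamily_mul_le_two_pow hL₁ hL hLn hXY ha hg)
  · have : 2 ^ n + 1 ≤ 2 ^ (2 * n) := by
      rw [two_mul, pow_add]
      nlinarith [Nat.pow_le_pow_right two_pos hn]
    calc #(range (2 ^ n + 1) ×ˢ range (2 ^ n + 1)) = (2 ^ n + 1) ^ 2 := by simp [sq]
      _ ≤ (2 ^ (2 * n)) ^ 2 := by gcongr
      _ = 2 ^ (4 * n) := by rw [← pow_mul]; ring_nf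

lemma sum_weight_clusters_le :
    ∑ A ∈ clusters (Q n) (smallSets (Q n) X), weight (Q n) A ≤ 2 / (n + 1) := by
  have hn := mul_le_dim hL₁ hLn
  rw [← sum_filter_add_sum_filter_not _ fun A => 48 * L * #A ≤ n ^ 2]
  have hL' : (1 / 2 : ℝ) ^ L ≤ 1 / (n + 1) := by
    rw [one_div_pow]
    gcongr
    exact_mod_cast hL
  calc _ ≤ (1 / 2 : ℝ) ^ L + (1 / 2) ^ n :=
        add_le_add (sum_weight_small_clusters_le hL₁ hL (by linarith) _)
          (sum_weight_large_clusters_le hL₁ hL hLn hXY)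
    _ ≤ (1 / 2) ^ L + (1 / 2) ^ L := by
        gcongr _ + ?_
        exact pow_le_pow_of_le_one (by norm_num) (by norm_num) (by linarith)
    _ ≤ 1 / (n + 1) + 1 / (n + 1) := by gcongr
    _ = 2 / (n + 1) := by ring

end ClusterSum

section Counting

open Filter Asymptotics

lemma eventually_mul_log_pow_le_sqrt (C : ℝ) (m : ℕ) :
    ∀ᶠ n : ℕ in atTop, C * ((Nat.log 2 n + 1 : ℕ) : ℝ) ^ m ≤ √n := by
  have natLog_isBigO : (fun n : ℕ => ((Nat.log 2 n + 1 : ℕ) : ℝ)) =O[atTop]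
      fun n : ℕ => Real.log n := by
    refine IsBigO.of_bound (2 / Real.log 2) ?_
    filter_upwards [eventually_ge_atTop 2] with n hn
    have hlog : 0 < Real.log 2 := Real.log_pos one_lt_two
    have hn' : Real.log 2 ≤ Real.log n := Real.log_le_log two_pos (by exact_mod_cast hn)
    have natLog_le : (Nat.log 2 n : ℝ) * Real.log 2 ≤ Real.log n :=
      (le_div_iff₀ hlog).1 (Real.natLog_le_logb n 2)
    rw [Real.norm_natCast, Real.norm_of_nonneg (hlog.le.trans hn'), div_mul_eq_mul_div,
      le_div_iff₀ hlog]
    push_cast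
    linarith
  have log_pow_isLittleO : (fun n : ℕ => Real.log n ^ m) =o[atTop] fun n : ℕ => √n := by
    have := (isLittleO_log_rpow_rpow_atTop m one_half_pos).comp_tendsto
      tendsto_natCast_atTop_atTop
    simpa [Function.comp_def, Real.sqrt_eq_rpow] using this
  filter_upwards [(((natLog_isBigO.pow m).trans_isLittleO log_pow_isLittleO).const_mul_left C).def
    one_pos] with n hn
  rw [one_mul, Real.norm_of_nonneg (Real.sqrt_nonneg _)] at hn
  exact (le_abs_self _).trans hn

lemma eventually_sum_weight_clusters_le : ∀ᶠ n : ℕ in atTop, ∀ X Y : Finset (V n),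
    (Q n).IsBipartiteWith (X : Set (V n)) Y →
      ∑ A ∈ clusters (Q n) (smallSets (Q n) X), weight (Q n) A ≤ 2 / (n + 1) := by
  filter_upwards [eventually_mul_log_pow_le_sqrt (10 ^ 8) 3] with n hn X Y hXY
  exact sum_weight_clusters_le (Nat.le_add_left 1 _) (Nat.lt_pow_succ_log_self one_lt_two n) hn hXY

variable {n k : ℕ} {X Y : Finset (V n)} {ℐ : Finset (Finset (V n))}

lemma card_indepSets_le_of_small_side (hn : 3 ≤ n)
    (hXY : (Q n).IsBipartiteWith (X : Set (V n)) Y) (hcover : X ∪ Y = univ)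
    (hσ : ∑ A ∈ clusters (Q n) (smallSets (Q n) X), weight (Q n) A ≤ 2 / (n + 1))
    (hℐ : ∀ I ∈ ℐ, (Q n).IsIndepSet I ∧ I ∩ X ∈ smallSets (Q n) X ∧ k < #(I ∩ X)) :
    (#ℐ : ℝ) ≤ 2 ^ 2 ^ (n - 1) * ((1 / 2) ^ k + 8 / (n + 1)) := by
  have hd := cube_isRegularOfDegree n
  have two_pow : 2 ^ n = 2 * 2 ^ (n - 1) := by rw [← pow_succ', Nat.sub_add_cancel (by lia)]
  have hX := two_mul_card_eq_of_isBipartiteWith hXY hd (by lia)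
  have hY := two_mul_card_eq_of_isBipartiteWith hXY.symm hd (by lia)
  rw [card_cube] at hX hY
  have hn' : (3 : ℝ) ≤ n := by exact_mod_cast hn
  calc (#ℐ : ℝ) ≤ 2 ^ #Y * ∑ A ∈ smallSets (Q n) X with k + 1 ≤ #A, weight (Q n) A :=
        card_indepSets_le hXY hcover
          (fun I hI => ⟨(hℐ I hI).1, mem_filter.2 ⟨(hℐ I hI).2.1, (hℐ I hI).2.2⟩⟩)
          ((filter_subset _ _).trans (filter_subset _ _))
    _ ≤ 2 ^ #Y * (2 * (1 / 2) ^ (k + 1)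
          + 4 * ∑ A ∈ clusters (Q n) (smallSets (Q n) X), weight (Q n) A) := by
        gcongr
        refine sum_weight_tail_le hd hX.le (filter_subset _ _) isLowerSet_smallSets
          (hσ.trans ?_) _
        rw [div_le_div_iff₀ (by linarith) two_pos]
        linarith
    _ ≤ 2 ^ 2 ^ (n - 1) * (2 * (1 / 2) ^ (k + 1) + 4 * (2 / (n + 1))) := by
        rw [show #Y = 2 ^ (n - 1) by lia]
        gcongr
    _ = 2 ^ 2 ^ (n - 1) * ((1 / 2) ^ k + 8 / (n + 1)) := by ring

lemma eventually_ncard_balanced_le : ∀ᶠ n : ℕ in atTop, ∀ k : ℕ,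
    ({I : Finset (V n) | (∀ x ∈ I, ∀ y ∈ I, ¬ (Q n).Adj x y) ∧
      k < min #(I ∩ evens n) #(I ∩ odds n)}.ncard : ℝ)
      ≤ (2 * (1 / 2) ^ k + 16 * (1 / (n + 1))) * 2 ^ 2 ^ (n - 1) := by
  classical
  filter_upwards [eventually_sum_weight_clusters_le, eventually_ge_atTop 3] with n hσ hn k
  have hXY := cube_isBipartiteWith n
  have hYX := hXY.symm
  have hcover := evens_union_odds n
  set side : Finset (V n) → Finset (Finset (V n)) := fun X =>
    {I | (Q n).IsIndepSet I ∧ I ∩ X ∈ smallSets (Q n) X ∧ k < #(I ∩ X)}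
  have sub : {I : Finset (V n) | (∀ x ∈ I, ∀ y ∈ I, ¬ (Q n).Adj x y) ∧
      k < min #(I ∩ evens n) #(I ∩ odds n)} ⊆ ↑(side (evens n) ∪ side (odds n)) := by
    rintro I ⟨hI, hkI⟩
    have hI' : (Q n).IsIndepSet I := fun x hx y hy _ => hI x hx y hy
    obtain ⟨hkX, hkY⟩ := lt_min_iff.1 hkI
    have := inter_mem_smallSets_or hXY (cube_isRegularOfDegree n) (by lia) hI'
    simpa [side, hI', hkX, hkY] using this
  have hsub : _ ≤ #(side (evens n)) + #(side (odds n)) :=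
    (Set.ncard_le_ncard sub (finite_toSet _)).trans
      ((Set.ncard_coe_finset _).trans_le (card_union_le _ _))
  have card_evens := card_indepSets_le_of_small_side (k := k) (ℐ := side (evens n)) hn hXY hcover
    (hσ _ _ hXY) fun I hI => (mem_filter.1 hI).2
  have card_odds := card_indepSets_le_of_small_side (k := k) (ℐ := side (odds n)) hn hYX
    ((union_comm _ _).trans hcover) (hσ _ _ hYX) fun I hI => (mem_filter.1 hI).2
  calc _ ≤ (#(side (evens n)) : ℝ) + #(side (odds n)) := by exact_mod_cast hsub
    _ ≤ _ := add_le_add card_evens card_odds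
    _ = _ := by ring

end Counting

end BalancedIndepSets

/-- If `k(n) → ∞`, the number of independent sets `I` in `Qₙ` with
`min{|I ∩ ℰ|, |I ∩ 𝒪|} > k(n)` is `o(2^(2^(n−1)))`. -/
theorem count_balanced_indep_sets
    (k : ℕ → ℕ) (hk : Filter.Tendsto k Filter.atTop Filter.atTop) :
    ∀ ε : ℝ, 0 < ε → ∃ n₀ : ℕ, ∀ n : ℕ, n₀ ≤ n →
      ({I : Finset (V n) | (∀ x ∈ I, ∀ y ∈ I, ¬ (Q n).Adj x y) ∧
          k n < min (I ∩ evens n).card (I ∩ odds n).card}.ncard : ℝ) ≤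
        ε * 2 ^ 2 ^ (n - 1) := by
  intro ε hε
  have half_pow_tendsto : Filter.Tendsto (fun n => (1 / 2 : ℝ) ^ k n) Filter.atTop (nhds 0) :=
    (tendsto_pow_atTop_nhds_zero_of_lt_one (by norm_num) (by norm_num)).comp hk
  have bound_tendsto : Filter.Tendsto (fun n : ℕ => 2 * (1 / 2 : ℝ) ^ k n + 16 * (1 / (n + 1 : ℝ)))
      Filter.atTop (nhds 0) := by
    simpa using (half_pow_tendsto.const_mul 2).add
      (tendsto_one_div_add_atTop_nhds_zero_nat.const_mul 16)
  refine Filter.eventually_atTop.1 ?_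
  filter_upwards [BalancedIndepSets.eventually_ncard_balanced_le,
    bound_tendsto.eventually_le_const hε] with n hcount hbound
  exact (hcount (k n)).trans (mul_le_mul_of_nonneg_right hbound (by positivity))
end
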